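/- arXiv:0705.2686 — 10 statements merged into one kernel-verified Lean document; each statement's English description precedes it below -/
import Mathlib

section
/- Let M be a module over 𝒪_ℱ, let x ∈ M, and let 0 ≤ s ≤ r. If x vanishes at every subtorus of G of dimension greater than s, then the set of subtori of G of dimension exactly s at which x does not vanish is finite. -/
open scoped Classical

noncomputable section

/-- The `r`-torus `G = (ℝ/ℤ)^r`. -/
abbrev Torus (r : ℕ) : Type := Fin r → AddCircle (1 : ℝ)

/-- The character `χ_α : G → ℝ/ℤ` associated to `α ∈ ℤ^r` is trivial on the subgroup `H`. -/
def IsTrivialOn {r : ℕ} (α : Fin r → ℤ) (H : AddSubgroup (Torus r)) : Prop :=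
  ∀ x ∈ H, (∑ i, α i • x i) = (0 : AddCircle (1 : ℝ))

/-- The subgroup of `ℤ^r` consisting of characters trivial on `H`. -/
def trivialChars {r : ℕ} (H : AddSubgroup (Torus r)) : AddSubgroup (Fin r → ℤ) where
  carrier := {α | IsTrivialOn α H}
  zero_mem' := by
    intro x _
    simp
  add_mem' := by
    intro α β hα hβ x hx
    have := hα x hx
    have := hβ x hx
    simp only [Pi.add_apply, add_zsmul]
    rw [Finset.sum_add_distrib]
    simp_all
  neg_mem' := by
    intro α hα x hx
    have := hα x hx
    simp only [Pi.neg_apply, neg_zsmul]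
    rw [Finset.sum_neg_distrib]
    simp_all

/-- A subtorus of `G`: a closed connected subgroup. -/
structure Subtorus (r : ℕ) where
  toAddSubgroup : AddSubgroup (Torus r)
  isClosed' : IsClosed (toAddSubgroup : Set (Torus r))
  isConnected' : IsConnected (toAddSubgroup : Set (Torus r))

/-- The dimension of a subtorus: `r` minus the rank of the group of characters trivial on it. -/
def Subtorus.dim {r : ℕ} (K : Subtorus r) : ℕ :=
  r - Module.finrank ℤ (AddSubgroup.toIntSubmodule (trivialChars K.toAddSubgroup))

/-- The set `ℱ` of finite subgroups of the torus, as a type. -/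
def FinSub (r : ℕ) : Type := {F : AddSubgroup (Torus r) // (F : Set (Torus r)).Finite}

/-- The ring `𝒪_ℱ = ∏_{F ∈ ℱ} H^*(BG/F; ℚ) = ∏_{F ∈ ℱ} ℚ[x₁,…,x_r]`. -/
abbrev OcalF (r : ℕ) : Type := FinSub r → MvPolynomial (Fin r) ℚ

/-- The linear form `α₁x₁ + ⋯ + α_r x_r` associated to a character `α`. -/
def lform {r : ℕ} (α : Fin r → ℤ) : MvPolynomial (Fin r) ℚ :=
  ∑ i, MvPolynomial.C (α i : ℚ) * MvPolynomial.X i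

/-- The Euler class `e(α) ∈ 𝒪_ℱ` of a character `α`. -/
def euler {r : ℕ} (α : Fin r → ℤ) : OcalF r :=
  fun F => if IsTrivialOn α F.1 then lform α else 1

/-- The idempotent `e_F ∈ 𝒪_ℱ` supported at the finite subgroup `F`. -/
def idemF {r : ℕ} (F : FinSub r) : OcalF r :=
  fun F' => if F' = F then 1 else 0

/-- An element `x` of an `𝒪_ℱ`-module `M` vanishes at the subtorus `K` if it is killed by
a product of Euler classes of characters each nontrivial on `K`. -/
def VanishesAt {r : ℕ} {M : Type*} [AddCommGroup M] [Module (OcalF r) M]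
    (x : M) (K : Subtorus r) : Prop :=
  ∃ (n : ℕ) (αs : Fin n → (Fin r → ℤ)),
    (∀ i, ¬ IsTrivialOn (αs i) K.toAddSubgroup) ∧ (∏ i, euler (αs i)) • x = 0

end

open MeasureTheory UnitAddTorus in
/-- A closed subgroup of the torus is cut out by the characters trivial on it. -/
theorem mem_of_forall_trivialChars {r : ℕ} (H : AddSubgroup (Torus r))
    (hH : IsClosed (H : Set (Torus r))) (y : Torus r)
    (hy : ∀ α ∈ trivialChars H, (∑ i, α i • y i) = (0 : AddCircle (1 : ℝ))) : y ∈ H := by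
  by_contra hyH
  have : CompactSpace H := isCompact_iff_compactSpace.mp hH.isCompact
  let ν : Measure H := Measure.addHaarMeasure ⊤
  have : IsProbabilityMeasure ν := ⟨Measure.addHaarMeasure_self⟩
  have integrable_translate (z : Torus r) (f : C(Torus r, ℂ)) :
      Integrable (fun k : H => f (z + k)) ν :=
    (Continuous.integrable_of_hasCompactSupport (by fun_prop)
      (HasCompactSupport.of_compactSpace _))
  let I (z : Torus r) : C(Torus r, ℂ) →L[ℂ] ℂ := LinearMap.mkContinuous
    { toFun := fun f => ∫ k : H, f (z + k) ∂ν
      map_add' := fun f g => integral_add (integrable_translate z f) (integrable_translate z g)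
      map_smul' := fun c f => integral_const_mul c _ } 1 (fun f => by
        refine (norm_integral_le_of_norm_le_const (C := ‖f‖)
          (Filter.Eventually.of_forall fun k => f.norm_coe_le_norm _)).trans ?_
        simp)
  have hI (z f) : I z f = ∫ k : H, f (z + k) ∂ν := rfl
  have mFourier_translate (α : Fin r → ℤ) (a b : Torus r) :
      mFourier α (a + b) = mFourier α a * mFourier α b := by
    simp [mFourier, ← Finset.prod_mul_distrib, fourier_apply, AddCircle.toCircle_add]
  have mFourier_eq (α : Fin r → ℤ) (a : Torus r) :
      mFourier α a = ((∑ i, α i • a i : AddCircle (1 : ℝ)).toCircle : ℂ) := by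
    have h : ∀ s : Finset (Fin r), ((∑ i ∈ s, α i • a i : AddCircle (1 : ℝ)).toCircle : ℂ)
        = ∏ i ∈ s, ((α i • a i).toCircle : ℂ) := by
      intro s
      induction s using Finset.induction_on with
      | empty => simp
      | insert i s hi ih => rw [Finset.sum_insert hi, Finset.prod_insert hi,
          AddCircle.toCircle_add, Circle.coe_mul, ih]
    simp only [mFourier, ContinuousMap.coe_mk, fourier_apply]
    exact (h _).symm
  have mFourier_eq_one (α : Fin r → ℤ) (a : Torus r) :
      mFourier α a = 1 ↔ (∑ i, α i • a i : AddCircle (1 : ℝ)) = 0 := by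
    rw [mFourier_eq]
    constructor
    · intro h
      apply AddCircle.injective_toCircle (T := 1) one_ne_zero
      ext
      simpa using h
    · intro h
      simp [h]
  have hchar (α : Fin r → ℤ) (z : Torus r) :
      I z (mFourier α) = mFourier α z * I 0 (mFourier α) := by
    simp [hI, mFourier_translate, integral_const_mul]
  have heq : I y = I 0 := by
    refine ContinuousLinearMap.ext_on (s := Set.range (mFourier (d := Fin r))) ?_ ?_
    · exact Submodule.dense_iff_topologicalClosure_eq_top.mpr span_mFourier_closure_eq_top
    · rintro _ ⟨α, rfl⟩
      rw [hchar]
      by_cases hα : IsTrivialOn α H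
      · rw [(mFourier_eq_one α y).mpr (hy α hα), one_mul]
      · obtain ⟨k, hk, hk'⟩ : ∃ k ∈ H, (∑ i, α i • k i) ≠ (0 : AddCircle (1 : ℝ)) := by
          simpa [IsTrivialOn] using hα
        have h0 : I k (mFourier α) = I 0 (mFourier α) := by
          simp only [hI, zero_add]
          exact integral_add_left_eq_self (μ := ν) (fun h : H => mFourier α (h : Torus r)) ⟨k, hk⟩
        rw [hchar] at h0
        have : I 0 (mFourier α) = 0 := by
          by_contra hne
          exact hk' ((mFourier_eq_one α k).mp (mul_eq_right₀ hne |>.mp h0))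
        rw [this, mul_zero]
  let f : C(Torus r, ℂ) := ⟨fun z => (Metric.infDist z (H : Set (Torus r)) : ℂ),
    Complex.continuous_ofReal.comp (Metric.continuous_infDist_pt _)⟩
  have hf0 : I 0 f = 0 := by
    simp [hI, f, Metric.infDist_zero_of_mem]
  have hfy : I y f = ((∫ k : H, Metric.infDist (y + k) (H : Set (Torus r)) ∂ν : ℝ) : ℂ) := by
    simp only [hI, f, ContinuousMap.coe_mk]
    exact integral_ofReal
  have hcont : Continuous fun k : H => Metric.infDist (y + k) (H : Set (Torus r)) :=
    (Metric.continuous_infDist_pt _).comp (by fun_prop)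
  have hpos : 0 < ∫ k : H, Metric.infDist (y + k) (H : Set (Torus r)) ∂ν := by
    refine hcont.integral_pos_of_hasCompactSupport_nonneg_nonzero
      (HasCompactSupport.of_compactSpace _) (fun _ => Metric.infDist_nonneg) (x := 0) ?_
    rw [ZeroMemClass.coe_zero, add_zero]
    exact fun h => hyH ((hH.mem_iff_infDist_zero ⟨0, H.zero_mem⟩).mpr h)
  rw [heq, hf0] at hfy
  exact hpos.ne (by exact_mod_cast hfy)

/-- A subtorus is determined by the characters trivial on it. -/
theorem Subtorus.trivialChars_injective (r : ℕ) :
    Function.Injective fun K : Subtorus r => trivialChars K.toAddSubgroup := by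
  rintro ⟨K, hK, hK'⟩ ⟨L, hL, hL'⟩ h
  have h : trivialChars K = trivialChars L := h
  have : K = L := le_antisymm
    (fun y hy => mem_of_forall_trivialChars L hL y fun α hα => (h ▸ hα : α ∈ trivialChars K) y hy)
    (fun y hy => mem_of_forall_trivialChars K hK y fun α hα => (h ▸ hα : α ∈ trivialChars L) y hy)
  subst this
  rfl

/-- A submodule is saturated if it contains every element having a nonzero multiple in it. -/
def IsSaturated {r : ℕ} (A : Submodule ℤ (Fin r → ℤ)) : Prop :=
  ∀ (n : ℤ) (α : Fin r → ℤ), n ≠ 0 → n • α ∈ A → α ∈ A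

/-- The characters trivial on a subtorus form a saturated submodule. -/
theorem Subtorus.isSaturated {r : ℕ} (K : Subtorus r) :
    IsSaturated (AddSubgroup.toIntSubmodule (trivialChars K.toAddSubgroup)) := by
  intro n α hn hα y hy
  have hcont : Continuous fun z : Torus r => ∑ i, α i • z i := by fun_prop
  have hpre := (K.isConnected'.image _ hcont.continuousOn).isPreconnected
  have hfin : {u : AddCircle (1 : ℝ) | n • u = 0}.Finite := by
    have := AddCircle.finite_torsion (1 : ℝ) (n := n.natAbs) (Int.natAbs_pos.mpr hn)
    refine this.subset fun u hu => ?_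
    have hu : n • u = 0 := hu
    rcases Int.natAbs_eq n with h | h <;> rw [h] at hu <;> simpa using hu
  have hsub : (fun z : Torus r => ∑ i, α i • z i) '' (K.toAddSubgroup : Set (Torus r)) ⊆
      {u : AddCircle (1 : ℝ) | n • u = 0} := by
    rintro _ ⟨z, hz, rfl⟩
    have := hα z hz
    simpa [Finset.smul_sum, mul_smul] using this
  have hss := (hfin.subset hsub).countable.isTotallyDisconnected _ subset_rfl hpre
  have := hss ⟨y, hy, rfl⟩ ⟨0, K.toAddSubgroup.zero_mem, rfl⟩
  simpa using this

/-- An integral vector pairing to zero with every point of the torus vanishes. -/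
theorem eq_zero_of_forall_sum_smul_eq_zero {m : ℕ} (β : Fin m → ℤ)
    (h : ∀ y : Torus m, (∑ i, β i • y i) = (0 : AddCircle (1 : ℝ))) : β = 0 := by
  funext j
  by_contra hj
  have hj : (β j : ℝ) ≠ 0 := by exact_mod_cast hj
  have := h (Pi.single j (((2 * (β j : ℝ))⁻¹ : ℝ) : AddCircle (1 : ℝ)))
  rw [Finset.sum_eq_single j (fun i _ hi => by simp [hi]) (by simp), Pi.single_eq_same,
    ← AddCircle.coe_zsmul, AddCircle.coe_eq_zero_iff] at this
  obtain ⟨n, hn⟩ := this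
  simp only [zsmul_eq_mul, mul_one] at hn
  field_simp at hn
  have : n * 2 = 1 := by exact_mod_cast hn
  omega

/-- Every saturated submodule consists of the characters trivial on some subtorus. -/
theorem IsSaturated.exists_subtorus {r : ℕ} {A : Submodule ℤ (Fin r → ℤ)} (hA : IsSaturated A) :
    ∃ K : Subtorus r, AddSubgroup.toIntSubmodule (trivialChars K.toAddSubgroup) = A := by
  have : Module.IsTorsionFree ℤ ((Fin r → ℤ) ⧸ A) := by
    refine .of_smul_eq_zero fun n q hq => ?_
    obtain ⟨α, rfl⟩ := A.mkQ_surjective q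
    rw [← map_smul, Submodule.mkQ_apply, Submodule.Quotient.mk_eq_zero] at hq
    rw [or_iff_not_imp_left, Submodule.mkQ_apply, Submodule.Quotient.mk_eq_zero]
    exact fun hn => hA n α hn hq
  let b := Module.finBasis ℤ ((Fin r → ℤ) ⧸ A)
  let P := b.equivFun.toLinearMap ∘ₗ A.mkQ
  have hP : LinearMap.ker P = A := by
    simp [P, LinearEquiv.ker_comp]
  let T : Torus (Module.finrank ℤ ((Fin r → ℤ) ⧸ A)) →+ Torus r :=
    { toFun := fun y i => ∑ j, P (Pi.single i 1) j • y j
      map_zero' := by ext; simp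
      map_add' := fun y z => by ext; simp [Finset.sum_add_distrib] }
  have hT : Continuous T := by
    refine continuous_pi fun i => ?_
    change Continuous fun y : Torus _ => ∑ j, P (Pi.single i 1) j • y j
    fun_prop
  have hadj (α : Fin r → ℤ) (y) : ∑ i, α i • T y i = ∑ j, P α j • y j := by
    have hα : P α = ∑ i, α i • P (Pi.single i 1) := by
      conv_lhs => rw [← Finset.univ_sum_single α]
      rw [map_sum]
      refine Finset.sum_congr rfl fun i _ => ?_
      rw [← map_smul, ← Pi.single_smul, smul_eq_mul, mul_one]
    change ∑ i, α i • ∑ j, P (Pi.single i 1) j • y j = _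
    simp_rw [hα, Finset.sum_apply, Pi.smul_apply, Finset.sum_smul, Finset.smul_sum, smul_assoc]
    exact Finset.sum_comm
  refine ⟨⟨T.range, ?_, ?_⟩, ?_⟩
  · rw [AddMonoidHom.coe_range]
    exact (isCompact_range hT).isClosed
  · rw [AddMonoidHom.coe_range]
    exact isConnected_range hT
  · refine Eq.trans ?_ hP
    ext α
    rw [LinearMap.mem_ker]
    constructor
    · exact fun hα => eq_zero_of_forall_sum_smul_eq_zero _ fun y =>
        (hadj α y).symm.trans (hα _ ⟨y, rfl⟩)
    · rintro hα _ ⟨y, rfl⟩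
      rw [hadj, hα]
      simp

/-- A saturated submodule has no proper overmodule of the same rank. -/
theorem IsSaturated.eq_of_le_of_finrank_le {r : ℕ} {A B : Submodule ℤ (Fin r → ℤ)}
    (hA : IsSaturated A) (hAB : A ≤ B) (h : Module.finrank ℤ B ≤ Module.finrank ℤ A) : A = B := by
  refine le_antisymm hAB fun β hβ => ?_
  have hq := (A.submoduleOf B).finrank_quotient_add_finrank
  rw [(Submodule.submoduleOfEquivOfLe hAB).finrank_eq] at hq
  have hz : Module.finrank ℤ (B ⧸ A.submoduleOf B) = 0 := by omega
  obtain ⟨n, hn, h0⟩ := Module.finrank_eq_zero_iff.mp hz (Submodule.Quotient.mk ⟨β, hβ⟩)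
  rw [← Submodule.Quotient.mk_smul, Submodule.Quotient.mk_eq_zero] at h0
  exact hA n β hn h0

/-- If `x` vanishes at all subtori of dimension greater than `s`, then `x` fails to vanish at only
finitely many subtori of dimension `s` on which all characters in a saturated submodule `A` are
trivial. -/
theorem finite_support_of_isSaturated {r s : ℕ}
    {M : Type*} [AddCommGroup M] [Module (OcalF r) M] (x : M)
    (hvan : ∀ K : Subtorus r, s < K.dim → VanishesAt x K)
    (A : Submodule ℤ (Fin r → ℤ)) (hA : IsSaturated A) :
    {K : Subtorus r | (K.dim = s ∧ ¬ VanishesAt x K) ∧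
      A ≤ AddSubgroup.toIntSubmodule (trivialChars K.toAddSubgroup)}.Finite := by
  have hrank (B : Submodule ℤ (Fin r → ℤ)) : Module.finrank ℤ B ≤ r := by
    simpa using B.finrank_le
  induction hd : r - Module.finrank ℤ A using Nat.strong_induction_on generalizing A with
  | _ d ih =>
  subst hd
  obtain ⟨H, rfl⟩ := hA.exists_subtorus
  set A := AddSubgroup.toIntSubmodule (trivialChars H.toAddSubgroup) with hAdef
  rcases lt_or_ge s H.dim with hH | hH
  · obtain ⟨n, αs, hαs, hx⟩ := hvan H hH
    let C (i : Fin n) : Submodule ℤ (Fin r → ℤ) := sInf {B | IsSaturated B ∧ A ≤ B ∧ αs i ∈ B}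
    have hC (i : Fin n) : IsSaturated (C i) := fun m α hm hα => by
      rw [Submodule.mem_sInf] at hα ⊢
      exact fun B hB => hB.1 m α hm (hα B hB)
    have hAC (i : Fin n) : A ≤ C i := le_sInf fun B hB => hB.2.1
    have hαC (i : Fin n) : αs i ∈ C i := by
      rw [Submodule.mem_sInf]
      exact fun B hB => hB.2.2
    have hlt (i : Fin n) : Module.finrank ℤ A < Module.finrank ℤ (C i) := by
      by_contra hle
      have := hA.eq_of_le_of_finrank_le (hAC i) (not_lt.mp hle)
      exact hαs i (this ▸ hαC i : αs i ∈ A)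
    refine (Set.finite_iUnion fun i =>
      ih (r - Module.finrank ℤ (C i)) ?_ (C i) (hC i) rfl).subset ?_
    · have := hlt i
      have := hrank (C i)
      omega
    · rintro K ⟨⟨hKs, hK⟩, hAK⟩
      obtain ⟨i, hi⟩ : ∃ i, IsTrivialOn (αs i) K.toAddSubgroup := by
        by_contra! hne
        exact hK ⟨n, αs, hne, hx⟩
      exact Set.mem_iUnion.mpr ⟨i, ⟨hKs, hK⟩, sInf_le ⟨K.isSaturated, hAK, hi⟩⟩
  · refine Set.Subsingleton.finite fun K hK L hL => Subtorus.trivialChars_injective r ?_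
    have key (K : Subtorus r) (hKs : K.dim = s)
        (hAK : A ≤ AddSubgroup.toIntSubmodule (trivialChars K.toAddSubgroup)) :
        A = AddSubgroup.toIntSubmodule (trivialChars K.toAddSubgroup) := by
      refine hA.eq_of_le_of_finrank_le hAK ?_
      have := hrank A
      have := hrank (AddSubgroup.toIntSubmodule (trivialChars K.toAddSubgroup))
      rw [Subtorus.dim] at hKs
      rw [Subtorus.dim, ← hAdef] at hH
      omega
    exact AddSubgroup.toIntSubmodule.injective
      ((key K hK.1.1 hK.2).symm.trans (key L hL.1.1 hL.2))

/-- Let `M` be a module over `𝒪_ℱ`, `x ∈ M`, and `0 ≤ s ≤ r`.  If `x` vanishes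
at every subtorus of `G` of dimension greater than `s`, then the set of subtori of dimension
exactly `s` at which `x` does not vanish is finite. -/
theorem finiteness_of_support_in_dimension_s
    (r s : ℕ) (hs : s ≤ r)
    (M : Type) [AddCommGroup M] [Module (OcalF r) M] (x : M)
    (hvan : ∀ K : Subtorus r, s < K.dim → VanishesAt x K) :
    {K : Subtorus r | K.dim = s ∧ ¬ VanishesAt x K}.Finite := by
  have hbot : IsSaturated (⊥ : Submodule ℤ (Fin r → ℤ)) := fun n α hn hα =>
    (smul_eq_zero.mp hα).resolve_left hn
  exact (finite_support_of_isSaturated x hvan ⊥ hbot).subset fun K hK => ⟨hK, bot_le⟩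
end

section
/- Let M be a module over 𝒪_ℱ and let x ∈ M. If x vanishes at every one-dimensional subtorus of G, then the set {F ∈ ℱ : e_F·x ≠ 0} is finite. -/
open scoped Classical

namespace Torus

variable {r : ℕ}

/-- The one-parameter subgroup `y ↦ (v₁ y, …, v_r y)` of the torus. -/
def oneParam (v : Fin r → ℤ) : AddCircle (1 : ℝ) →+ Torus r where
  toFun y i := v i • y
  map_zero' := by ext i; simp
  map_add' y z := by ext i; simp

lemma continuous_oneParam (v : Fin r → ℤ) : Continuous (oneParam v) :=
  continuous_pi fun i => continuous_zsmul (v i)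

/-- The subtorus that is the image of the one-parameter subgroup with direction `v`. -/
def lineSubtorus (v : Fin r → ℤ) : Subtorus r where
  toAddSubgroup := (oneParam v).range
  isClosed' := by
    rw [AddMonoidHom.coe_range]
    exact (isCompact_range (continuous_oneParam v)).isClosed
  isConnected' := by
    rw [AddMonoidHom.coe_range]
    exact isConnected_range (continuous_oneParam v)

lemma int_eq_zero_of_forall_zsmul_addCircle (n : ℤ)
    (h : ∀ y : AddCircle (1 : ℝ), n • y = 0) : n = 0 := by
  by_contra hn
  have hn' : (n : ℝ) ≠ 0 := by exact_mod_cast hn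
  have h1 := h (((1 / (2 * n) : ℝ)) : AddCircle (1 : ℝ))
  rw [← AddCircle.coe_zsmul, AddCircle.coe_eq_zero_iff] at h1
  obtain ⟨m, hm⟩ := h1
  have h2 : (m : ℝ) * 2 = 1 := by
    simp only [zsmul_eq_mul, mul_one] at hm
    rw [hm]
    field_simp
  have h3 : m * 2 = 1 := by exact_mod_cast h2
  omega

lemma isTrivialOn_lineSubtorus_iff (v α : Fin r → ℤ) :
    IsTrivialOn α (lineSubtorus v).toAddSubgroup ↔ α ⬝ᵥ v = 0 := by
  have key : ∀ y : AddCircle (1 : ℝ), ∑ i, α i • oneParam v y i = (α ⬝ᵥ v) • y := by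
    intro y
    simp only [dotProduct, Finset.sum_smul, mul_smul]
    rfl
  constructor
  · intro h
    refine int_eq_zero_of_forall_zsmul_addCircle _ fun y => ?_
    rw [← key]
    exact h _ ⟨y, rfl⟩
  · rintro h _ ⟨y, rfl⟩
    rw [key, h, zero_smul]

lemma dim_lineSubtorus {v : Fin r → ℤ} (hv : v ≠ 0) : (lineSubtorus v).dim = 1 := by
  let f : (Fin r → ℤ) →ₗ[ℤ] ℤ := dotProductBilin ℤ ℤ v
  have hf : ∀ α, f α = v ⬝ᵥ α := fun α => rfl
  have hker : AddSubgroup.toIntSubmodule (trivialChars (lineSubtorus v).toAddSubgroup)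
      = LinearMap.ker f := by
    ext α
    rw [LinearMap.mem_ker, hf, dotProduct_comm]
    exact isTrivialOn_lineSubtorus_iff v α
  have hsum := Submodule.finrank_quotient_add_finrank (LinearMap.ker f)
  rw [f.quotKerEquivRange.finrank_eq] at hsum
  have hle : Module.finrank ℤ (LinearMap.range f) ≤ 1 := by
    simpa using Submodule.finrank_le (LinearMap.range f)
  have hpos : 0 < Module.finrank ℤ (LinearMap.range f) := by
    have hne : f v ≠ 0 := by rw [hf]; simpa using hv
    have : Nontrivial (LinearMap.range f) :=
      ⟨⟨⟨f v, v, rfl⟩, 0, fun h => hne (congrArg Subtype.val h)⟩⟩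
    exact Module.finrank_pos
  rw [Subtorus.dim, hker]
  simp only [Module.finrank_fintype_fun_eq_card, Fintype.card_fin] at hsum
  omega

/-- The coordinatewise embedding `ℤ^r → ℚ^r`. -/
def ratCast (r : ℕ) : (Fin r → ℤ) →ₗ[ℤ] (Fin r → ℚ) where
  toFun α i := α i
  map_add' α β := by ext i; simp
  map_smul' n α := by ext i; simp

/-- The rational span of a sublattice of `ℤ^r`. -/
def ratSpan (L : Submodule ℤ (Fin r → ℤ)) : Submodule ℚ (Fin r → ℚ) :=
  Submodule.span ℚ (L.map (ratCast r))

lemma ratCast_mem_ratSpan {L : Submodule ℤ (Fin r → ℤ)} {α : Fin r → ℤ} (hα : α ∈ L) :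
    ratCast r α ∈ ratSpan L :=
  Submodule.subset_span ⟨α, hα, rfl⟩

lemma exists_smul_eq_ratCast (L : Submodule ℤ (Fin r → ℤ)) {w : Fin r → ℚ}
    (hw : w ∈ ratSpan L) : ∃ n : ℤ, n ≠ 0 ∧ ∃ β ∈ L, n • w = ratCast r β := by
  induction hw using Submodule.span_induction with
  | mem w hw =>
    obtain ⟨β, hβ, rfl⟩ := hw
    exact ⟨1, one_ne_zero, β, hβ, one_smul _ _⟩
  | zero => exact ⟨1, one_ne_zero, 0, L.zero_mem, by simp⟩
  | add w z _ _ hw hz =>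
    obtain ⟨m, hm, β, hβ, h1⟩ := hw
    obtain ⟨n, hn, γ, hγ, h2⟩ := hz
    refine ⟨m * n, mul_ne_zero hm hn, n • β + m • γ,
      L.add_mem (L.smul_mem _ hβ) (L.smul_mem _ hγ), ?_⟩
    rw [map_add, map_smul, map_smul, ← h1, ← h2, smul_add, smul_smul, smul_smul, mul_comm n m]
  | smul q w _ hw =>
    obtain ⟨m, hm, β, hβ, h1⟩ := hw
    refine ⟨q.den * m, mul_ne_zero (by exact_mod_cast q.den_nz) hm, q.num • β,
      L.smul_mem _ hβ, ?_⟩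
    rw [map_smul, ← h1]
    ext i
    simp only [Pi.smul_apply]
    simp only [zsmul_eq_mul, smul_eq_mul, Int.cast_mul, Int.cast_natCast,
      ← Rat.mul_den_eq_num q]
    ring

/-- A sublattice of less than full rank has a nonzero integral normal vector. -/
lemma exists_normal_of_ratSpan_ne_top {L : Submodule ℤ (Fin r → ℤ)} (hL : ratSpan L ≠ ⊤) :
    ∃ v : Fin r → ℤ, v ≠ 0 ∧ ∀ α, ratCast r α ∈ ratSpan L → α ⬝ᵥ v = 0 := by
  obtain ⟨f, hf, hle⟩ := Submodule.exists_le_ker_of_lt_top _ hL.lt_top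
  obtain ⟨b, hb⟩ := IsLocalization.exist_integer_multiples_of_finite (nonZeroDivisors ℤ)
    (fun i : Fin r => f (Pi.single i 1))
  choose v hv using hb
  have hb0 : ((b : ℤ) : ℚ) ≠ 0 := by exact_mod_cast nonZeroDivisors.ne_zero b.2
  have hv' : ∀ i, (v i : ℚ) = (b : ℤ) * f (Pi.single i 1) := by
    intro i
    simpa using hv i
  have hdot : ∀ α : Fin r → ℤ, ((α ⬝ᵥ v : ℤ) : ℚ) = (b : ℤ) * f (ratCast r α) := by
    intro α
    rw [LinearMap.pi_apply_eq_sum_univ f (ratCast r α), Finset.mul_sum]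
    simp only [dotProduct, Int.cast_sum, Int.cast_mul, hv']
    refine Finset.sum_congr rfl fun i _ => ?_
    have : (fun j => if i = j then (1 : ℚ) else 0) = Pi.single i 1 := by
      ext j; simp [Pi.single_apply, eq_comm]
    rw [this, smul_eq_mul]
    change (α i : ℚ) * _ = _ * ((α i : ℚ) * _)
    ring
  refine ⟨v, ?_, fun α hα => ?_⟩
  · rintro rfl
    refine hf (LinearMap.pi_ext' fun i => LinearMap.ext_ring ?_)
    simpa [hb0] using hv' i
  · have h := hdot α
    rw [LinearMap.mem_ker.1 (hle hα), mul_zero] at h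
    exact_mod_cast h

lemma finite_setOf_zsmul_eq_zero {n : ℤ} (hn : n ≠ 0) :
    {y : AddCircle (1 : ℝ) | n • y = 0}.Finite :=
  AddCircle.finite_torsion_of_isSMulRegular_int _ _ <|
    .of_right_eq_zero_of_smul fun _ => by simp [hn]

/-- Only finitely many finite subgroups are annihilated by a sublattice of full rank. -/
lemma finite_setOf_le_trivialChars {L : Submodule ℤ (Fin r → ℤ)} (hL : ratSpan L = ⊤) :
    {F : FinSub r | ∀ α ∈ L, IsTrivialOn α F.1}.Finite := by
  have h : ∀ i : Fin r, ∃ n : ℤ, n ≠ 0 ∧ (Pi.single i n : Fin r → ℤ) ∈ L := by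
    intro i
    obtain ⟨n, hn, β, hβ, h⟩ := exists_smul_eq_ratCast L (w := Pi.single i 1) (hL ▸ trivial)
    refine ⟨n, hn, ?_⟩
    convert hβ
    ext j
    have hj := congrFun h j
    change n • (Pi.single i 1 : Fin r → ℚ) j = (β j : ℚ) at hj
    rcases eq_or_ne j i with rfl | hji
    · simpa using hj
    · simpa [hji, eq_comm] using hj
  choose n hn hnL using h
  have hfin : (Set.univ.pi fun i => {y : AddCircle (1 : ℝ) | n i • y = 0}).Finite :=
    Set.Finite.pi fun i => finite_setOf_zsmul_eq_zero (hn i)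
  refine (hfin.finite_subsets.preimage
    (f := fun F : FinSub r => (F.1 : Set (Torus r))) ?_).subset ?_
  · exact fun F _ F' _ h => Subtype.ext (SetLike.coe_injective h)
  · intro F hF y hy i _
    have := hF _ (hnL i) y hy
    rwa [Finset.sum_eq_single i (fun j _ hj => by simp [hj]) (by simp), Pi.single_eq_same] at this

/-- If `e_F • x ≠ 0` and a product of Euler classes kills `x`, then one of the characters
is trivial on `F`. -/
lemma exists_isTrivialOn_of_prod_euler_smul_eq_zero {M : Type*} [AddCommGroup M]
    [Module (OcalF r) M] {x : M} {n : ℕ} {αs : Fin n → (Fin r → ℤ)}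
    (h : (∏ i, euler (αs i)) • x = 0) {F : FinSub r} (hF : idemF F • x ≠ 0) :
    ∃ i, IsTrivialOn (αs i) F.1 := by
  by_contra! hcon
  apply hF
  have heq : idemF F * ∏ i, euler (αs i) = idemF F := by
    funext F'
    by_cases hF' : F' = F
    · subst hF'
      simp [euler, hcon]
    · simp [idemF, hF']
  rw [← heq, mul_smul, h, smul_zero]

lemma finite_support_of_le_trivialChars {M : Type*} [AddCommGroup M] [Module (OcalF r) M]
    {x : M} (hvan : ∀ K : Subtorus r, K.dim = 1 → VanishesAt x K)
    (W : Submodule ℚ (Fin r → ℚ)) :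
    ∀ L : Submodule ℤ (Fin r → ℤ), ratSpan L = W →
      {F : FinSub r | idemF F • x ≠ 0 ∧ ∀ α ∈ L, IsTrivialOn α F.1}.Finite := by
  induction W using WellFoundedGT.induction with
  | ind W ih =>
  rintro L rfl
  by_cases hL : ratSpan L = ⊤
  · exact (finite_setOf_le_trivialChars hL).subset fun F hF => hF.2
  obtain ⟨v, hv, hvL⟩ := exists_normal_of_ratSpan_ne_top hL
  obtain ⟨n, αs, hαs, hx⟩ := hvan _ (dim_lineSubtorus hv)
  have hlt : ∀ i, ratSpan L < ratSpan (L ⊔ Submodule.span ℤ {αs i}) := by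
    intro i
    refine lt_of_le_not_ge
      (Submodule.span_mono (Submodule.map_mono (le_sup_left : L ≤ _))) fun hle => ?_
    refine hαs i ((isTrivialOn_lineSubtorus_iff v _).2 (hvL _ (hle (ratCast_mem_ratSpan ?_))))
    exact Submodule.mem_sup_right (Submodule.mem_span_singleton_self _)
  refine (Set.finite_iUnion fun i => ih _ (hlt i) _ rfl).subset fun F hF => ?_
  obtain ⟨i, hi⟩ := exists_isTrivialOn_of_prod_euler_smul_eq_zero hx hF.1
  refine Set.mem_iUnion.2 ⟨i, hF.1, ?_⟩
  have hsup : L ⊔ Submodule.span ℤ {αs i} ≤ AddSubgroup.toIntSubmodule (trivialChars F.1) :=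
    sup_le hF.2 ((Submodule.span_singleton_le_iff_mem _ _).2 hi)
  exact fun α hα => hsup hα

end Torus

/-- If `x ∈ M` vanishes at every one-dimensional subtorus of `G`, then the set
`{F ∈ ℱ : e_F · x ≠ 0}` is finite. -/
theorem finiteness_of_spread
    (r : ℕ) (M : Type) [AddCommGroup M] [Module (OcalF r) M] (x : M)
    (hvan : ∀ K : Subtorus r, K.dim = 1 → VanishesAt x K) :
    {F : FinSub r | idemF F • x ≠ 0}.Finite := by
  refine (Torus.finite_support_of_le_trivialChars hvan _ ⊥ rfl).subset fun F hF => ⟨hF, ?_⟩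
  intro α hα
  rw [(Submodule.mem_bot ℤ).1 hα]
  exact (trivialChars F.1).zero_mem
end

section
/- Suppose that for each i ∈ I, M_i is a faithfully flat R_i-module, regarded as an R-module via the projection R → R_i. If N is a Hausdorff R-module with (∏_{i∈I} M_i) ⊗_R N = 0, then N = 0. -/
open scoped Classical TensorProduct

noncomputable section

variable {I : Type*} (R : I → Type*) [∀ i, CommRing (R i)]

/-- The idempotent `e_i ∈ R = ∏_j R_j` whose `i`-th component is `1` and the others `0`. -/
def piIdem (i : I) : ∀ j, R j :=
  fun j => if j = i then 1 else 0

/-- A module `N` over `R = ∏_i R_i` is Hausdorff if the only element killed by all the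
idempotents `e_i` is `0`. -/
def IsHausdorffMod (N : Type*) [AddCommGroup N] [Module (∀ i, R i) N] : Prop :=
  ∀ n : N, (∀ i, piIdem R i • n = 0) → n = 0

variable (M : I → Type*) [∀ i, AddCommGroup (M i)] [∀ i, Module (R i) (M i)]

/-- Each `R_i`-module `M i` is regarded as a module over `R = ∏_j R_j` via the
projection `R → R_i`. -/
instance projModule (i : I) : Module (∀ j, R j) (M i) :=
  Module.compHom (M i) (Pi.evalRingHom R i)

/-- The component `e_i N` of a module `N` over `∏_j R_j`. -/
def idemComponent (N : Type*) [AddCommGroup N] [Module (∀ i, R i) N] (i : I) :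
    Submodule (∀ i, R i) N :=
  LinearMap.range (LinearMap.lsmul (∀ i, R i) N (piIdem R i))

theorem piIdem_eq_single (i : I) : piIdem R i = Pi.single i 1 := by
  ext j
  by_cases h : j = i
  · subst h
    simp [piIdem]
  · simp [piIdem, h]

theorem piIdem_mul (i : I) (a : ∀ i, R i) : piIdem R i * a = Pi.single i (a i) := by
  rw [piIdem_eq_single, ← Pi.single_mul_left, one_mul]

/-- The component `e_i N` is a module over `R_i`. -/
instance idemComponentModule (N : Type*) [AddCommGroup N] [Module (∀ i, R i) N] (i : I) :
    Module (R i) (idemComponent R N i) where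
  smul r x := (Pi.single i r : ∀ j, R j) • x
  one_smul := by
    rintro ⟨_, n, rfl⟩
    refine Subtype.ext ?_
    change (Pi.single i 1 : ∀ j, R j) • piIdem R i • n = piIdem R i • n
    rw [← piIdem_eq_single, smul_smul, piIdem_mul]
    simp [piIdem_eq_single]
  mul_smul r s x := by
    change (Pi.single i (r * s) : ∀ j, R j) • x
      = (Pi.single i r : ∀ j, R j) • (Pi.single i s : ∀ j, R j) • x
    rw [Pi.single_mul, mul_smul]
  smul_zero r := smul_zero (Pi.single i r : ∀ j, R j)
  smul_add r := smul_add (Pi.single i r : ∀ j, R j)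
  add_smul r s x := by
    change (Pi.single i (r + s) : ∀ j, R j) • x
      = (Pi.single i r : ∀ j, R j) • x + (Pi.single i s : ∀ j, R j) • x
    rw [Pi.single_add, add_smul]
  zero_smul x := by
    change (Pi.single i 0 : ∀ j, R j) • x = 0
    rw [Pi.single_zero, zero_smul]

/-- The projection `N → e_i N`. -/
def toIdemComponent (N : Type*) [AddCommGroup N] [Module (∀ i, R i) N] (i : I) :
    N →ₗ[∀ i, R i] idemComponent R N i :=
  (LinearMap.lsmul (∀ i, R i) N (piIdem R i)).rangeRestrict

theorem toIdemComponent_smul (N : Type*) [AddCommGroup N] [Module (∀ i, R i) N] (i : I)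
    (a : ∀ i, R i) (n : N) :
    toIdemComponent R N i (a • n) = a i • toIdemComponent R N i n := by
  refine Subtype.ext ?_
  change piIdem R i • a • n = (Pi.single i (a i) : ∀ j, R j) • piIdem R i • n
  rw [smul_smul, smul_smul, piIdem_mul, mul_comm, piIdem_mul, Pi.single_eq_same]

/-- The map `(∏_j M_j) ⊗_R N → M_i ⊗_{R_i} e_i N` induced by the projections. -/
def tensorToComponent (N : Type*) [AddCommGroup N] [Module (∀ i, R i) N] (i : I) :
    (∀ i, M i) ⊗[∀ i, R i] N →+ M i ⊗[R i] idemComponent R N i :=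
  TensorProduct.liftAddHom
    (AddMonoidHom.mk' (fun m => AddMonoidHom.mk' (fun n => m i ⊗ₜ toIdemComponent R N i n)
        fun x y => by rw [map_add, TensorProduct.tmul_add])
      fun x y => by ext n; exact TensorProduct.add_tmul _ _ _)
    fun a m n => by
      change (a i • m i) ⊗ₜ[R i] _ = m i ⊗ₜ[R i] toIdemComponent R N i (a • n)
      rw [toIdemComponent_smul, TensorProduct.smul_tmul]

theorem tensorToComponent_tmul (N : Type*) [AddCommGroup N] [Module (∀ i, R i) N] (i : I)
    (m : ∀ i, M i) (n : N) :
    tensorToComponent R M N i (m ⊗ₜ n) = m i ⊗ₜ toIdemComponent R N i n :=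
  rfl

theorem tensorToComponent_surjective (N : Type*) [AddCommGroup N] [Module (∀ i, R i) N]
    (i : I) : Function.Surjective (tensorToComponent R M N i) := by
  intro t
  induction t with
  | zero => exact ⟨0, map_zero _⟩
  | tmul m x =>
    obtain ⟨n, rfl⟩ := LinearMap.surjective_rangeRestrict _ x
    refine ⟨Pi.single i m ⊗ₜ n, ?_⟩
    rw [tensorToComponent_tmul, Pi.single_eq_same]
    rfl
  | add x y hx hy =>
    obtain ⟨a, rfl⟩ := hx
    obtain ⟨b, rfl⟩ := hy
    exact ⟨a + b, map_add _ _ _⟩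

/-- If each `M_i` is a faithfully flat `R_i`-module and `N` is a Hausdorff
`∏_i R_i`-module with `(∏_i M_i) ⊗ N = 0`, then `N = 0`. -/
theorem product_faithful_on_Hausdorff_modules
    (hff : ∀ i, Module.FaithfullyFlat (R i) (M i))
    (N : Type*) [AddCommGroup N] [Module (∀ i, R i) N]
    (hN : IsHausdorffMod R N)
    (htensor : ∀ t : (∀ i, M i) ⊗[∀ i, R i] N, t = 0) :
    ∀ n : N, n = 0 := by
  intro n
  refine hN n fun i => ?_
  have := hff i
  have : Subsingleton ((∀ i, M i) ⊗[∀ i, R i] N) := subsingleton_of_forall_eq 0 htensor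
  have : Subsingleton (M i ⊗[R i] idemComponent R N i) :=
    (tensorToComponent_surjective R M N i).subsingleton
  have : Subsingleton (idemComponent R N i) :=
    (Module.FaithfullyFlat.subsingleton_tensorProduct_iff_right (R i) (M i)).mp this
  exact congrArg Subtype.val (Subsingleton.elim (toIdemComponent R N i n) 0)

end
end

section
/- Let K be a subtorus of G and let α ∈ ℤ^r be a character that is nontrivial on K. Then multiplication by the Euler class e(α) on 𝒪_ℱ is a split monomorphism of 𝒪_{ℱ/K}-modules: it is injective and admits an 𝒪_{ℱ/K}-linear left inverse. -/
open scoped Classical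

noncomputable section

/-- `H^*(BG/H) = Sym_ℚ(X(H) ⊗ ℚ)`, realized as the `ℚ`-subalgebra of `ℚ[x₁,…,x_r]`
generated by the linear forms of the characters trivial on `H`. -/
def HB {r : ℕ} (H : AddSubgroup (Torus r)) : Subalgebra ℚ (MvPolynomial (Fin r) ℚ) :=
  Algebra.adjoin ℚ {p | ∃ α : Fin r → ℤ, IsTrivialOn α H ∧ p = lform α}

/-- `K` is the identity component of `H` (as sets: `K` is the image in `G` of the connected
component of `0` in the subspace `H`). -/
def IsIdComp {r : ℕ} (K H : AddSubgroup (Torus r)) : Prop :=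
  (K : Set (Torus r)) =
    Subtype.val '' connectedComponent (⟨0, H.zero_mem⟩ : (H : Set (Torus r)))

/-- `ℱ/K`: the closed subgroups of `G` with identity component `K`. -/
def FKset (r : ℕ) (K : Subtorus r) : Type :=
  {H : AddSubgroup (Torus r) //
    IsClosed (H : Set (Torus r)) ∧ IsIdComp K.toAddSubgroup H}

/-- The ring `𝒪_{ℱ/K} = ∏_{K̃ ∈ ℱ/K} H^*(BG/K̃)`. -/
abbrev OcalFK (r : ℕ) (K : Subtorus r) : Type :=
  ∀ H : FKset r K, ↥(HB H.1)

lemma isIdComp_self {r : ℕ} (K : Subtorus r) :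
    IsIdComp K.toAddSubgroup K.toAddSubgroup := by
  haveI : ConnectedSpace ((K.toAddSubgroup : Set (Torus r))) :=
    Subtype.connectedSpace K.isConnected'
  unfold IsIdComp
  rw [PreconnectedSpace.connectedComponent_eq_univ, Set.image_univ, Subtype.range_coe]

/-- `K` itself is a member of `ℱ/K`. -/
def fkSelf (r : ℕ) (K : Subtorus r) : FKset r K :=
  ⟨K.toAddSubgroup, K.isClosed', isIdComp_self K⟩

/-- The index map `F ↦ FK` from `ℱ` to `ℱ/K`, where `FK` is the closed subgroup generated
by `F` and `K`.  (The fact that the identity component of `FK` is `K` is a true statement of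
point-set topology which we do not prove here; it is supplied through the `dite`.) -/
def fkIndex {r : ℕ} (K : Subtorus r) (F : FinSub r) : FKset r K :=
  if h : IsIdComp K.toAddSubgroup ((F.1 ⊔ K.toAddSubgroup).topologicalClosure)
  then ⟨(F.1 ⊔ K.toAddSubgroup).topologicalClosure,
        AddSubgroup.isClosed_topologicalClosure _, h⟩
  else fkSelf r K

/-- The inflation map `𝒪_{ℱ/K} → 𝒪_ℱ`: the component at a finite subgroup `F` is the
projection onto the factor indexed by `FK` followed by the inclusion
`H^*(BG/FK) ⊆ ℚ[x₁,…,x_r]`. -/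
def infl {r : ℕ} (K : Subtorus r) : OcalFK r K →+* OcalF r :=
  Pi.ringHom fun F =>
    ((HB (fkIndex K F).1).val.toRingHom).comp (Pi.evalRingHom _ (fkIndex K F))

/-- The idempotent of `𝒪_{ℱ/K}` supported at the index `i ∈ ℱ/K`. -/
def idemFK {r : ℕ} {K : Subtorus r} (i : FKset r K) : OcalFK r K :=
  fun j => if j = i then 1 else 0

/-- An `𝒪_{ℱ/K}`-module is Hausdorff if the only element killed by all the idempotents of
the product decomposition indexed by `ℱ/K` is `0`. -/
def IsHausdorffFK (r : ℕ) (K : Subtorus r)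
    (N : Type*) [AddCommGroup N] [Module (OcalFK r K) N] : Prop :=
  ∀ n : N, (∀ i : FKset r K, idemFK i • n = 0) → n = 0

/-- The multiplicative set `𝓔_K ⊆ 𝒪_ℱ` generated by the Euler classes of the characters
nontrivial on `K`. -/
def eulerSet {r : ℕ} (K : Subtorus r) : Submonoid (OcalF r) :=
  Submonoid.closure {x | ∃ α : Fin r → ℤ, ¬ IsTrivialOn α K.toAddSubgroup ∧ x = euler α}

end

lemma le_fkIndex {r : ℕ} (K : Subtorus r) (F : FinSub r) :
    K.toAddSubgroup ≤ (fkIndex K F).1 := by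
  by_cases h : IsIdComp K.toAddSubgroup ((F.1 ⊔ K.toAddSubgroup).topologicalClosure)
  · have hF : fkIndex K F = ⟨_, AddSubgroup.isClosed_topologicalClosure _, h⟩ := dif_pos h
    rw [hF]
    exact le_sup_right.trans (AddSubgroup.le_topologicalClosure _)
  · have hF : fkIndex K F = fkSelf r K := dif_neg h
    rw [hF]
    exact le_rfl

lemma HB_anti {r : ℕ} {H H' : AddSubgroup (Torus r)} (h : H ≤ H') : HB H' ≤ HB H := by
  apply Algebra.adjoin_mono
  rintro p ⟨β, hβ, rfl⟩
  exact ⟨β, fun x hx => hβ x (h hx), rfl⟩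

/-- The characters trivial on a connected group form a saturated sublattice of `ℤ^r`. -/
lemma Subtorus.isTrivialOn_of_zsmul {r : ℕ} (K : Subtorus r) {n : ℤ} (hn : n ≠ 0)
    {β : Fin r → ℤ} (h : IsTrivialOn (n • β) K.toAddSubgroup) :
    IsTrivialOn β K.toAddSubgroup := by
  set χ : Torus r → AddCircle (1 : ℝ) := fun x => ∑ i, β i • x i with hχ
  have hcont : Continuous χ := by fun_prop
  have hpre : IsPreconnected (χ '' K.toAddSubgroup) :=
    K.isConnected'.isPreconnected.image χ hcont.continuousOn
  have hfin : (χ '' (K.toAddSubgroup : Set (Torus r))).Finite := by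
    refine (AddCircle.finite_torsion_of_isSMulRegular_int (1 : ℝ) n ?_).subset ?_
    · exact IsSMulRegular.of_right_eq_zero_of_smul fun x hx => by simpa [hn] using hx
    · rintro _ ⟨x, hx, rfl⟩
      have := h x hx
      simpa [hχ, Finset.smul_sum, mul_smul] using this
  have hsub : (χ '' (K.toAddSubgroup : Set (Torus r))).Subsingleton := by
    by_contra hns
    exact hpre.infinite_of_nontrivial (Set.not_subsingleton_iff.mp hns) hfin
  intro x hx
  have h0 : χ 0 = 0 := by simp [hχ]
  rw [← h0]
  exact hsub ⟨x, hx, rfl⟩ ⟨0, K.toAddSubgroup.zero_mem, rfl⟩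

lemma Subtorus.exists_dual_ne_zero {r : ℕ} (K : Subtorus r) {α : Fin r → ℤ}
    (hα : ¬ IsTrivialOn α K.toAddSubgroup) :
    ∃ φ : (Fin r → ℤ) →ₗ[ℤ] ℤ,
      (∀ β, IsTrivialOn β K.toAddSubgroup → φ β = 0) ∧ φ α ≠ 0 := by
  set L : Submodule ℤ (Fin r → ℤ) := AddSubgroup.toIntSubmodule (trivialChars K.toAddSubgroup)
  have hL : ∀ β, β ∈ L ↔ IsTrivialOn β K.toAddSubgroup := fun β => Iff.rfl
  have : Module.IsTorsionFree ℤ ((Fin r → ℤ) ⧸ L) := by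
    refine Module.IsTorsionFree.of_smul_eq_zero fun n x hx => ?_
    obtain ⟨β, rfl⟩ := L.mkQ_surjective x
    rw [← map_smul, Submodule.mkQ_apply, Submodule.Quotient.mk_eq_zero, hL] at hx
    rw [Submodule.mkQ_apply, Submodule.Quotient.mk_eq_zero, hL]
    by_cases hn : n = 0
    · exact Or.inl hn
    · exact Or.inr (K.isTrivialOn_of_zsmul hn hx)
  have hα' : L.mkQ α ≠ 0 := by
    rwa [Submodule.mkQ_apply, Ne, Submodule.Quotient.mk_eq_zero, hL]
  rw [Ne, ← Module.forall_dual_apply_eq_zero_iff ℤ] at hα'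
  push Not at hα'
  obtain ⟨ψ, hψ⟩ := hα'
  refine ⟨ψ ∘ₗ L.mkQ, fun β hβ => ?_, hψ⟩
  have : L.mkQ β = 0 := by
    rwa [Submodule.mkQ_apply, Submodule.Quotient.mk_eq_zero, hL]
  simp [this]

lemma lform_ne_zero {r : ℕ} {α : Fin r → ℤ} (hα : α ≠ 0) : lform α ≠ 0 := by
  intro h
  apply hα
  funext j
  have := congrArg (MvPolynomial.eval (Pi.single j (1 : ℚ))) h
  simpa [lform, Pi.single_apply] using this

/-- The substitution `x_i ↦ x_i - (φ(e_i) / φ(α)) · lform α`. -/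
noncomputable def projAlong {r : ℕ} (φ : (Fin r → ℤ) →ₗ[ℤ] ℤ) (α : Fin r → ℤ) :
    MvPolynomial (Fin r) ℚ →ₐ[ℚ] MvPolynomial (Fin r) ℚ :=
  MvPolynomial.aeval fun i =>
    MvPolynomial.X i - MvPolynomial.C ((φ (Pi.single i 1) : ℚ) / φ α) * lform α

lemma projAlong_lform {r : ℕ} (φ : (Fin r → ℤ) →ₗ[ℤ] ℤ) (α β : Fin r → ℤ) :
    projAlong φ α (lform β) =
      lform β - MvPolynomial.C ((φ β : ℚ) / φ α) * lform α := by
  have hφ : (φ β : ℚ) = ∑ i, (β i : ℚ) * φ (Pi.single i 1) := by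
    have : φ β = ∑ i, β i * φ (Pi.single i 1) := by
      conv_lhs => rw [pi_eq_sum_univ' β, map_sum]
      refine Finset.sum_congr rfl fun i _ => ?_
      rw [map_smul, smul_eq_mul]
    exact_mod_cast this
  rw [hφ, Finset.sum_div, map_sum, Finset.sum_mul]
  conv_rhs => rw [lform]
  rw [← Finset.sum_sub_distrib, lform, map_sum]
  refine Finset.sum_congr rfl fun i _ => ?_
  rw [map_mul, projAlong, MvPolynomial.aeval_X, ← MvPolynomial.algebraMap_eq,
    AlgHom.commutes, mul_div_assoc, map_mul]
  ring

lemma projAlong_eq_self {r : ℕ} {H : AddSubgroup (Torus r)} {φ : (Fin r → ℤ) →ₗ[ℤ] ℤ}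
    (hφ : ∀ β, IsTrivialOn β H → φ β = 0) (α : Fin r → ℤ)
    {c : MvPolynomial (Fin r) ℚ} (hc : c ∈ HB H) : projAlong φ α c = c := by
  suffices HB H ≤ AlgHom.equalizer (projAlong φ α) (AlgHom.id ℚ _) from this hc
  refine Algebra.adjoin_le ?_
  rintro _ ⟨β, hβ, rfl⟩
  simp [projAlong_lform, hφ β hβ]

lemma lform_dvd_sub_projAlong {r : ℕ} (φ : (Fin r → ℤ) →ₗ[ℤ] ℤ) (α : Fin r → ℤ)
    (p : MvPolynomial (Fin r) ℚ) : lform α ∣ p - projAlong φ α p := by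
  rw [← Ideal.mem_span_singleton, ← Ideal.Quotient.mk_eq_mk_iff_sub_mem]
  suffices (Ideal.Quotient.mkₐ ℚ (Ideal.span {lform α})) =
      (Ideal.Quotient.mkₐ ℚ (Ideal.span {lform α})).comp (projAlong φ α) from
    DFunLike.congr_fun this p
  ext i
  simp only [AlgHom.comp_apply, projAlong, MvPolynomial.aeval_X, Ideal.Quotient.mkₐ_eq_mk]
  rw [Ideal.Quotient.mk_eq_mk_iff_sub_mem, Ideal.mem_span_singleton, sub_sub_cancel]
  exact dvd_mul_left _ _

/-- Multiplication by `lform α` on `ℚ[x₁,…,x_r]` splits over `H^*(BG/H)` as soon as some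
functional vanishes on the characters trivial on `H` but not on `α`. -/
lemma exists_lform_retraction {r : ℕ} {H : AddSubgroup (Torus r)} {α : Fin r → ℤ}
    {φ : (Fin r → ℤ) →ₗ[ℤ] ℤ} (hφ : ∀ β, IsTrivialOn β H → φ β = 0) (hφα : φ α ≠ 0) :
    ∃ s : MvPolynomial (Fin r) ℚ →+ MvPolynomial (Fin r) ℚ,
      (∀ c ∈ HB H, ∀ p, s (c * p) = c * s p) ∧ ∀ p, s (lform α * p) = p := by
  have hl : lform α ≠ 0 := lform_ne_zero (by rintro rfl; simp at hφα)
  have hπ : projAlong φ α (lform α) = 0 := by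
    have : (φ α : ℚ) ≠ 0 := by exact_mod_cast hφα
    simp [projAlong_lform, div_self this]
  choose s hs using lform_dvd_sub_projAlong φ α
  refine ⟨⟨⟨s, ?_⟩, ?_⟩, ?_, ?_⟩
  · exact mul_left_cancel₀ hl (by simp [← hs])
  · intro p q
    apply mul_left_cancel₀ hl
    simp only [mul_add, ← hs, map_add]
    ring
  · intro c hc p
    apply mul_left_cancel₀ hl
    change lform α * s (c * p) = lform α * (c * s p)
    rw [← hs, map_mul, projAlong_eq_self hφ α hc, mul_left_comm, ← hs]
    ring
  · intro p
    apply mul_left_cancel₀ hl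
    change lform α * s (lform α * p) = lform α * p
    rw [← hs, map_mul, hπ, zero_mul, sub_zero]

/-- If `α` is a character nontrivial on the subtorus `K`, then multiplication
by the Euler class `e(α)` on `𝒪_ℱ` is a split monomorphism of `𝒪_{ℱ/K}`-modules: it is
injective and admits an `𝒪_{ℱ/K}`-linear left inverse (where `𝒪_ℱ` is an `𝒪_{ℱ/K}`-module
via the inflation map). -/
theorem euler_mul_split_mono_over_OFK
    (r : ℕ) (K : Subtorus r) (α : Fin r → ℤ)
    (hα : ¬ IsTrivialOn α K.toAddSubgroup) :
    Function.Injective (fun y : OcalF r => euler α * y) ∧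
    ∃ s : OcalF r →+ OcalF r,
      (∀ (c : OcalFK r K) (y : OcalF r), s (infl K c * y) = infl K c * s y) ∧
      (∀ y : OcalF r, s (euler α * y) = y) := by
  obtain ⟨φ, hφ, hφα⟩ := K.exists_dual_ne_zero hα
  obtain ⟨s, hs, hsα⟩ := exists_lform_retraction hφ hφα
  have key : ∃ s : OcalF r →+ OcalF r,
      (∀ (c : OcalFK r K) (y : OcalF r), s (infl K c * y) = infl K c * s y) ∧
      (∀ y : OcalF r, s (euler α * y) = y) := by
    refine ⟨AddMonoidHom.mk' (fun y F => if IsTrivialOn α F.1 then s (y F) else y F) ?_, ?_, ?_⟩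
    · intro y z
      funext F
      by_cases h : IsTrivialOn α F.1 <;> simp [h]
    · intro c y
      funext F
      by_cases h : IsTrivialOn α F.1
      · simpa [h] using hs (infl K c F) (HB_anti (le_fkIndex K F) (c (fkIndex K F)).2) (y F)
      · simp [h]
    · intro y
      funext F
      by_cases h : IsTrivialOn α F.1 <;> simp [h, euler, hsα]
  have ⟨t, _, ht⟩ := key
  exact ⟨Function.LeftInverse.injective (g := t) ht, key⟩
end

section
/- Let R be a commutative Noetherian ring, I a nonempty index set, and (M_i)_{i∈I} a family of nonzero free R-modules. Then the product ∏_{i∈I} M_i is a faithfully flat R-module. -/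
noncomputable section

/-- Over a Noetherian ring, an arbitrary product of flat modules is flat. -/
theorem Module.Flat.pi_of_isNoetherianRing
    {R : Type*} [CommRing R] [IsNoetherianRing R] {I : Type*}
    {M : I → Type*} [∀ i, AddCommGroup (M i)] [∀ i, Module R (M i)]
    [∀ i, Module.Flat R (M i)] : Module.Flat R (∀ i, M i) := by
  refine Module.Flat.of_forall_isTrivialRelation fun {l f x} hfx => ?_
  obtain ⟨k, g, hg⟩ := Submodule.fg_iff_exists_fin_generating_family.mp
    (IsNoetherian.noetherian (LinearMap.ker (Fintype.linearCombination R f)))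
  have hz (i : I) : ∃ z : Fin k → M i, ∀ s, x s i = ∑ m, g m s • z m := by
    have hi : ∑ s, f s • x s i = 0 := by simpa using congrFun hfx i
    obtain ⟨n, a, y, hxy, ha⟩ := Module.Flat.isTrivialRelation_of_sum_smul_eq_zero hi
    have hspan (j : Fin n) : ∃ c : Fin k → R, ∑ m, c m • g m = fun s => a s j := by
      rw [← Submodule.mem_span_range_iff_exists_fun, hg, LinearMap.mem_ker,
        Fintype.linearCombination_apply]
      simpa [mul_comm] using ha j
    choose c hc using hspan
    refine ⟨fun m => ∑ j, c j m • y j, fun s => ?_⟩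
    have has (j : Fin n) : a s j = ∑ m, c j m * g m s := by
      simpa using (congrFun (hc j) s).symm
    simp_rw [hxy, has, Finset.sum_smul, Finset.smul_sum, smul_smul]
    rw [Finset.sum_comm]
    simp_rw [mul_comm]
  choose z hz using hz
  refine ⟨k, fun s m => g m s, fun m i => z i m, fun s => ?_, fun m => ?_⟩
  · ext i
    simpa using hz i s
  · have hm : g m ∈ LinearMap.ker (Fintype.linearCombination R f) :=
      hg ▸ Submodule.subset_span ⟨m, rfl⟩
    simpa [Fintype.linearCombination_apply, mul_comm] using hm

/-- A flat module with a faithfully flat quotient is faithfully flat. -/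
theorem Module.FaithfullyFlat.of_surjective
    {R M N : Type*} [CommRing R] [AddCommGroup M] [Module R M] [AddCommGroup N] [Module R N]
    [Module.Flat R M] [Module.FaithfullyFlat R N] (p : M →ₗ[R] N)
    (hp : Function.Surjective p) : Module.FaithfullyFlat R M := by
  refine (iff_flat_and_ideal_smul_eq_top R M).mpr ⟨inferInstance, fun J hJ => ?_⟩
  refine ((iff_flat_and_ideal_smul_eq_top R N).mp inferInstance).2 J ?_
  have hmap := congrArg (Submodule.map p) hJ
  rwa [Submodule.map_smul'', Submodule.map_top, LinearMap.range_eq_top.mpr hp] at hmap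

/-- Over a commutative Noetherian ring `R`, a product of a nonempty family of
nonzero free `R`-modules is faithfully flat. -/
theorem product_of_free_faithfullyFlat
    (R : Type*) [CommRing R] [IsNoetherianRing R]
    (I : Type*) [Nonempty I]
    (M : I → Type*) [∀ i, AddCommGroup (M i)] [∀ i, Module R (M i)]
    (hfree : ∀ i, Module.Free R (M i)) (hnz : ∀ i, Nontrivial (M i)) :
    Module.FaithfullyFlat R (∀ i, M i) := by
  have : Module.Flat R (∀ i, M i) := Module.Flat.pi_of_isNoetherianRing
  obtain ⟨i⟩ := ‹Nonempty I›
  exact Module.FaithfullyFlat.of_surjective (LinearMap.proj (R := R) (φ := M) i)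
    (LinearMap.proj_surjective i)

end
end

section
/- Let 𝒮 be a set of finite subgroups of G. Suppose that for every one-dimensional subtorus K of G there exist finitely many characters α₁,…,α_n ∈ ℤ^r, each nontrivial on K, such that every F ∈ 𝒮 has some α_i trivial on F. Then 𝒮 is finite. -/
open scoped Classical

/-- A submodule of a finite module over a principal ideal domain either has torsion quotient,
killed by a single nonzero scalar, or lies in the kernel of a nonzero functional. -/
theorem Submodule.exists_smul_mem_or_exists_le_ker {R M : Type*} [CommRing R] [IsDomain R]
    [IsPrincipalIdealRing R] [AddCommGroup M] [Module R M] [Module.Finite R M]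
    (L : Submodule R M) :
    (∃ a : R, a ≠ 0 ∧ ∀ x, a • x ∈ L) ∨ ∃ f : M →ₗ[R] R, f ≠ 0 ∧ L ≤ LinearMap.ker f := by
  by_cases ht : Module.IsTorsion R (M ⧸ L)
  · obtain ⟨a, ha, ha'⟩ := Submodule.annihilator_top_inter_nonZeroDivisors ht
    refine Or.inl ⟨a, nonZeroDivisors.ne_zero ha', fun x => ?_⟩
    rw [← Submodule.Quotient.mk_eq_zero, Submodule.Quotient.mk_smul]
    exact Submodule.mem_annihilator.mp ha _ trivial
  · right
    obtain ⟨y, hy⟩ : ∃ y : M ⧸ L, y ∉ Submodule.torsion R (M ⧸ L) := by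
      by_contra! hall
      exact ht fun {y} => (Submodule.mem_torsion_iff y).mp (hall y)
    obtain ⟨x, rfl⟩ := Submodule.Quotient.mk_surjective L y
    have hx : (Submodule.torsion R (M ⧸ L)).mkQ (L.mkQ x) ≠ 0 := by
      simpa [Submodule.Quotient.mk_eq_zero] using hy
    obtain ⟨φ, hφ⟩ := not_forall.mp (mt (Module.forall_dual_apply_eq_zero_iff R _).mp hx)
    refine ⟨φ ∘ₗ (Submodule.torsion R (M ⧸ L)).mkQ ∘ₗ L.mkQ, fun h0 => hφ ?_, fun z hz => ?_⟩
    · exact LinearMap.congr_fun h0 x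
    · have : L.mkQ z = 0 := by simpa using hz
      simp only [LinearMap.mem_ker, LinearMap.comp_apply, this, map_zero]

/-- The kernel of a nonzero functional has corank one. -/
theorem finrank_ker_add_one_of_ne_zero {R M : Type*} [CommRing R] [IsDomain R]
    [AddCommGroup M] [Module R M] [Module.Finite R M] {f : M →ₗ[R] R} (hf : f ≠ 0) :
    Module.finrank R (LinearMap.ker f) + 1 = Module.finrank R M := by
  have hrange : Module.finrank R (LinearMap.range f) = 1 := by
    apply le_antisymm
    · simpa using Submodule.finrank_le (LinearMap.range f)
    · have : Nontrivial (LinearMap.range f) :=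
        Submodule.nontrivial_iff_ne_bot.mpr (mt LinearMap.range_eq_bot.mp hf)
      exact Module.finrank_pos
  rw [← (LinearMap.ker f).finrank_quotient_add_finrank, f.quotKerEquivRange.finrank_eq, hrange,
    add_comm]

/-- A nonzero integer does not annihilate the circle. -/
theorem AddCircle.eq_zero_of_forall_zsmul_eq_zero {n : ℤ}
    (hn : ∀ x : AddCircle (1 : ℝ), n • x = 0) : n = 0 := by
  by_contra h0
  have h0' : (n : ℝ) ≠ 0 := by exact_mod_cast h0
  have h := hn (((1 / (2 * n) : ℝ)) : AddCircle (1 : ℝ))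
  rw [← AddCircle.coe_zsmul, AddCircle.coe_eq_zero_iff] at h
  obtain ⟨m, hm⟩ := h
  have hm' : (m : ℝ) * 2 = 1 := by
    simp only [zsmul_eq_mul, mul_one] at hm
    rw [hm]
    field_simp
  have : m * 2 = 1 := by exact_mod_cast hm'
  omega

/-- The one-parameter subgroup `x ↦ (v₁x, …, v_r x)` of the torus. -/
def cocharacter {r : ℕ} (v : Fin r → ℤ) : AddCircle (1 : ℝ) →+ Torus r where
  toFun x i := v i • x
  map_zero' := by ext; simp
  map_add' x y := by ext; simp

theorem continuous_cocharacter {r : ℕ} (v : Fin r → ℤ) : Continuous (cocharacter v) :=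
  continuous_pi fun i => continuous_zsmul (v i)

theorem sum_zsmul_cocharacter {r : ℕ} (α v : Fin r → ℤ) (x : AddCircle (1 : ℝ)) :
    ∑ i, α i • cocharacter v x i = (α ⬝ᵥ v) • x := by
  simp only [cocharacter, dotProduct, Finset.sum_smul, mul_smul]
  rfl

/-- The image of a one-parameter subgroup, as a subtorus. -/
def cocharacterSubtorus {r : ℕ} (v : Fin r → ℤ) : Subtorus r where
  toAddSubgroup := (cocharacter v).range
  isClosed' := by
    rw [AddMonoidHom.coe_range]
    exact (isCompact_range (continuous_cocharacter v)).isClosed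
  isConnected' := by
    rw [AddMonoidHom.coe_range]
    exact isConnected_range (continuous_cocharacter v)

theorem isTrivialOn_cocharacterSubtorus_iff {r : ℕ} (α v : Fin r → ℤ) :
    IsTrivialOn α (cocharacterSubtorus v).toAddSubgroup ↔ α ⬝ᵥ v = 0 := by
  constructor
  · intro h
    refine AddCircle.eq_zero_of_forall_zsmul_eq_zero fun x => ?_
    rw [← sum_zsmul_cocharacter]
    exact h _ ⟨x, rfl⟩
  · rintro h _ ⟨x, rfl⟩
    rw [sum_zsmul_cocharacter, h, zero_smul]

theorem LinearMap.dotProduct_apply_single {r : ℕ} (f : (Fin r → ℤ) →ₗ[ℤ] ℤ) (α : Fin r → ℤ) :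
    (α ⬝ᵥ fun i => f (Pi.single i 1)) = f α := by
  rw [LinearMap.pi_apply_eq_sum_univ f α]
  simp only [dotProduct, smul_eq_mul]
  refine Finset.sum_congr rfl fun i _ => ?_
  congr 2
  ext j
  simp [Pi.single_apply, eq_comm]

/-- Every nonzero functional on the character group is the pairing with a one-dimensional
subtorus. -/
theorem exists_subtorus_dim_one {r : ℕ} {f : (Fin r → ℤ) →ₗ[ℤ] ℤ} (hf : f ≠ 0) :
    ∃ K : Subtorus r, K.dim = 1 ∧ ∀ α, IsTrivialOn α K.toAddSubgroup ↔ f α = 0 := by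
  have key : ∀ α, IsTrivialOn α
      (cocharacterSubtorus fun i => f (Pi.single i 1)).toAddSubgroup ↔ f α = 0 := fun α => by
    rw [isTrivialOn_cocharacterSubtorus_iff, LinearMap.dotProduct_apply_single]
  refine ⟨_, ?_, key⟩
  have hker : AddSubgroup.toIntSubmodule (trivialChars
      (cocharacterSubtorus fun i => f (Pi.single i 1)).toAddSubgroup) = LinearMap.ker f :=
    Submodule.ext key
  have hrank := finrank_ker_add_one_of_ne_zero hf
  rw [Module.finrank_fin_fun] at hrank
  rw [Subtorus.dim, hker]
  omega

/-- The points of the torus killed by a nonzero integer form a finite set. -/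
theorem finite_torsion_torus (r : ℕ) {a : ℤ} (ha : a ≠ 0) :
    {x : Torus r | ∀ i, a • x i = 0}.Finite := by
  have hfin : {u : AddCircle (1 : ℝ) | a • u = 0}.Finite := by
    refine (AddCircle.finite_torsion (1 : ℝ) (Int.natAbs_pos.mpr ha)).subset fun u hu => ?_
    exact natAbs_nsmul_eq_zero.mpr hu
  exact (Set.Finite.pi' fun _ => hfin)

/-- Only finitely many finite subgroups lie in a given finite subset of the torus. -/
theorem finite_finSub_subset {r : ℕ} {A : Set (Torus r)} (hA : A.Finite) :
    {F : FinSub r | (F.1 : Set (Torus r)) ⊆ A}.Finite :=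
  hA.finite_subsets.preimage
    (SetLike.coe_injective.comp Subtype.val_injective : Function.Injective
      fun F : FinSub r => (F.1 : Set (Torus r))).injOn

/-- Only finitely many finite subgroups are annihilated by a subgroup of `ℤ^r` with torsion
quotient. -/
theorem finite_finSub_of_smul_mem {r : ℕ} {L : Submodule ℤ (Fin r → ℤ)} {a : ℤ} (ha : a ≠ 0)
    (hL : ∀ α, a • α ∈ L) : {F : FinSub r | ∀ α ∈ L, IsTrivialOn α F.1}.Finite := by
  refine (finite_finSub_subset (finite_torsion_torus r ha)).subset fun F hF x hx i => ?_
  have := hF _ (hL (Pi.single i 1)) x hx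
  simpa [Pi.single_apply, ite_smul] using this

/-- Let `𝒮` be a set of finite subgroups of `G`.  Suppose that for every
one-dimensional subtorus `K` there are finitely many characters, each nontrivial on `K`, such
that every `F ∈ 𝒮` has one of them trivial on it.  Then `𝒮` is finite. -/
theorem finiteness_of_sets_of_finite_subgroups
    (r : ℕ) (S : Set (FinSub r))
    (h : ∀ K : Subtorus r, K.dim = 1 →
      ∃ (n : ℕ) (αs : Fin n → (Fin r → ℤ)),
        (∀ i, ¬ IsTrivialOn (αs i) K.toAddSubgroup) ∧
        (∀ F ∈ S, ∃ i, IsTrivialOn (αs i) F.1)) :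
    S.Finite := by
  suffices hL : ∀ L : Submodule ℤ (Fin r → ℤ),
      {F : FinSub r | F ∈ S ∧ ∀ α ∈ L, IsTrivialOn α F.1}.Finite by
    refine (hL ⊥).subset fun F hF => ⟨hF, fun α hα => ?_⟩
    rw [Submodule.mem_bot] at hα
    exact hα ▸ (trivialChars F.1).zero_mem
  intro L
  induction L using WellFoundedGT.induction with
  | ind L ih =>
    rcases L.exists_smul_mem_or_exists_le_ker with ⟨a, ha, haL⟩ | ⟨f, hf, hLf⟩
    · exact (finite_finSub_of_smul_mem ha haL).subset fun F hF => hF.2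
    · obtain ⟨K, hK, hKf⟩ := exists_subtorus_dim_one hf
      obtain ⟨n, αs, hαK, hαS⟩ := h K hK
      have hlt : ∀ i, L < L ⊔ Submodule.span ℤ {αs i} := fun i => by
        refine left_lt_sup.mpr fun hle => hαK i ((hKf _).mpr (hLf (hle ?_)))
        exact Submodule.mem_span_singleton_self _
      refine (Set.finite_iUnion fun i => ih _ (hlt i)).subset fun F ⟨hFS, hFL⟩ => ?_
      obtain ⟨i, hi⟩ := hαS F hFS
      refine Set.mem_iUnion.mpr ⟨i, hFS, ?_⟩
      have hle : L ⊔ Submodule.span ℤ {αs i} ≤ AddSubgroup.toIntSubmodule (trivialChars F.1) :=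
        sup_le hFL ((Submodule.span_singleton_le_iff_mem _ _).mpr hi)
      exact fun α hα => hle hα
end

section
/- Let 0 ≤ s ≤ r and let 𝒮 be a set of subtori of G. Suppose that for every subtorus H of G of dimension greater than s there exist finitely many characters α₁,…,α_n ∈ ℤ^r, each nontrivial on H, such that every K ∈ 𝒮 has some α_i trivial on K. Then 𝒮 contains only finitely many subtori of dimension s. -/
open scoped Classical

section Characters

variable {r : ℕ}

/-- The character `χ_α` of the torus as an additive homomorphism. -/
def torusChar (α : Fin r → ℤ) : Torus r →+ AddCircle (1 : ℝ) where
  toFun x := ∑ i, α i • x i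
  map_zero' := by simp
  map_add' x y := by simp [smul_add, Finset.sum_add_distrib]

theorem continuous_torusChar (α : Fin r → ℤ) : Continuous (torusChar α) := by
  change Continuous fun x : Torus r => ∑ i, α i • x i
  fun_prop

theorem torusChar_zsmul (n : ℤ) (α : Fin r → ℤ) (x : Torus r) :
    torusChar (n • α) x = n • torusChar α x := by
  change ∑ i, (n • α) i • x i = n • ∑ i, α i • x i
  simp [Finset.smul_sum, mul_smul]

theorem mFourier_eq_toCircle (α : Fin r → ℤ) (x : Torus r) :
    UnitAddTorus.mFourier α x = (AddCircle.toCircle (torusChar α x) : ℂ) := by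
  have h (t : Finset (Fin r)) : (AddCircle.toCircle (∑ i ∈ t, α i • x i) : ℂ) =
      ∏ i ∈ t, fourier (α i) (x i) := by
    induction t using Finset.induction_on with
    | empty => simp
    | insert i t hi ih =>
      rw [Finset.sum_insert hi, Finset.prod_insert hi, ← ih, AddCircle.toCircle_add, fourier_apply,
        Circle.coe_mul]
  exact (h Finset.univ).symm

theorem mFourier_add_apply (α : Fin r → ℤ) (x y : Torus r) :
    UnitAddTorus.mFourier α (x + y) =
      UnitAddTorus.mFourier α x * UnitAddTorus.mFourier α y := by
  simp [mFourier_eq_toCircle, AddCircle.toCircle_add]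

theorem mFourier_eq_one_iff (α : Fin r → ℤ) (x : Torus r) :
    UnitAddTorus.mFourier α x = 1 ↔ torusChar α x = 0 := by
  rw [mFourier_eq_toCircle, Circle.coe_eq_one, ← AddCircle.toCircle_zero (T := 1)]
  exact (AddCircle.injective_toCircle one_ne_zero).eq_iff

open MeasureTheory in
/-- A closed subgroup of the torus is cut out by the characters trivial on it. -/
theorem mem_of_forall_trivialChars_s12 {K : AddSubgroup (Torus r)} (hK : IsClosed (K : Set (Torus r)))
    {x : Torus r} (hx : ∀ α ∈ trivialChars K, torusChar α x = 0) : x ∈ K := by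
  by_contra hxK
  let _ : MeasurableSpace K := borel K
  have : BorelSpace K := ⟨rfl⟩
  have : CompactSpace K := isCompact_iff_compactSpace.mp hK.isCompact
  let μ : Measure K := Measure.addHaarMeasure ⊤
  have hμ : μ.real Set.univ = 1 := by
    have : μ Set.univ = 1 :=
      Measure.addHaarMeasure_self (K₀ := (⊤ : TopologicalSpace.PositiveCompacts K))
    simp [Measure.real, this]
  have hint (f : C(Torus r, ℂ)) (y : Torus r) : Integrable (fun k : K => f (y + k)) μ :=
    (by fun_prop : Continuous fun k : K => f (y + k)).integrable_of_hasCompactSupport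
      (HasCompactSupport.of_compactSpace _)
  have hcont (y : Torus r) :
      Continuous fun f : C(Torus r, ℂ) => ∫ k : K, f (y + k) ∂μ := by
    refine (LipschitzWith.of_dist_le_mul (K := 1) fun f g => ?_).continuous
    rw [dist_eq_norm, dist_eq_norm, ← integral_sub (hint f y) (hint g y), NNReal.coe_one, one_mul]
    simpa [hμ] using norm_integral_le_of_norm_le_const (μ := μ)
      (Filter.Eventually.of_forall fun k : K => (f - g).norm_coe_le_norm (y + k))
  let E : Submodule ℂ C(Torus r, ℂ) :=
    { carrier := {f | ∫ k : K, f (x + k) ∂μ = ∫ k : K, f (0 + k) ∂μ}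
      zero_mem' := by simp
      add_mem' := by
        intro f g hf hg
        simp only [Set.mem_ofPred_eq, ContinuousMap.add_apply] at *
        rw [integral_add (hint f x) (hint g x), integral_add (hint f 0) (hint g 0), hf, hg]
      smul_mem' := by
        intro c f hf
        simp only [Set.mem_ofPred_eq, ContinuousMap.smul_apply, integral_smul] at *
        rw [hf] }
  have hE : ∀ f, f ∈ E := by
    have hclosed : IsClosed (E : Set C(Torus r, ℂ)) := isClosed_eq (hcont x) (hcont 0)
    have hspan : Submodule.span ℂ (Set.range UnitAddTorus.mFourier) ≤ E := by
      rw [Submodule.span_le]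
      rintro _ ⟨α, rfl⟩
      change ∫ k : K, UnitAddTorus.mFourier α (x + k) ∂μ =
        ∫ k : K, UnitAddTorus.mFourier α (0 + k) ∂μ
      by_cases hα : α ∈ trivialChars K
      · simp [mFourier_add_apply, (mFourier_eq_one_iff α x).2 (hx α hα)]
      · have : ∃ k ∈ K, torusChar α k ≠ 0 := by
          by_contra! hcon
          exact hα hcon
        obtain ⟨k₀, hk₀, hne⟩ := this
        have hzero : ∫ k : K, UnitAddTorus.mFourier α k ∂μ = 0 := by
          have h1 := integral_add_left_eq_self (μ := μ)
            (fun k : K => UnitAddTorus.mFourier α k) ⟨k₀, hk₀⟩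
          simp only [AddSubgroup.coe_add, mFourier_add_apply, integral_const_mul] at h1
          by_contra h0
          exact hne ((mFourier_eq_one_iff α k₀).1 (mul_right_cancel₀ h0 (by rw [h1, one_mul])))
        simp [mFourier_add_apply, integral_const_mul, hzero]
    have htop := Submodule.topologicalClosure_minimal _ hspan hclosed
    rw [UnitAddTorus.span_mFourier_closure_eq_top] at htop
    exact fun f => htop trivial
  have hcoset : IsClosed ((x + ·) '' (K : Set (Torus r))) :=
    (Homeomorph.addLeft x).isClosedMap _ hK
  have hdisj : Disjoint (K : Set (Torus r)) ((x + ·) '' (K : Set (Torus r))) := by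
    rw [Set.disjoint_left]
    rintro _ hy ⟨k, hk, rfl⟩
    exact hxK (by simpa using K.sub_mem hy hk)
  obtain ⟨f, hf0, hf1, -⟩ := exists_continuous_zero_one_of_isClosed hK hcoset hdisj
  have h := hE ⟨fun y => (f y : ℂ), by fun_prop⟩
  change ∫ k : K, (f (x + k) : ℂ) ∂μ = ∫ k : K, (f (0 + k) : ℂ) ∂μ at h
  have e1 (k : K) : f (x + k) = 1 := hf1 ⟨k, k.2, rfl⟩
  have e0 (k : K) : f k = 0 := hf0 k.2
  simp [e1, e0, hμ] at h

theorem Subtorus.ext_of_trivialChars {K L : Subtorus r}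
    (h : trivialChars K.toAddSubgroup = trivialChars L.toAddSubgroup) : K = L := by
  have key : ∀ K L : Subtorus r, trivialChars K.toAddSubgroup = trivialChars L.toAddSubgroup →
      K.toAddSubgroup ≤ L.toAddSubgroup := fun K L h x hx =>
    mem_of_forall_trivialChars_s12 L.isClosed' fun α hα => (h ▸ hα : α ∈ trivialChars _) x hx
  cases K
  cases L
  congr
  exact le_antisymm (key _ _ h) (key _ _ h.symm)

/-- The group of characters trivial on a subtorus is saturated. -/
theorem Subtorus.mem_trivialChars_of_zsmul_mem (K : Subtorus r) {n : ℤ} (hn : n ≠ 0)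
    {α : Fin r → ℤ} (h : n • α ∈ trivialChars K.toAddSubgroup) :
    α ∈ trivialChars K.toAddSubgroup := by
  have hfin : {u : AddCircle (1 : ℝ) | n • u = 0}.Finite :=
    AddCircle.finite_torsion_of_isSMulRegular_int _ _ <|
      .of_right_eq_zero_of_smul fun _ ↦ by simp [hn]
  have hsub : torusChar α '' K.toAddSubgroup ⊆ {u : AddCircle (1 : ℝ) | n • u = 0} := by
    rintro _ ⟨x, hx, rfl⟩
    exact (torusChar_zsmul n α x).symm.trans (h x hx)
  have hsing := hfin.countable.isTotallyDisconnected _ hsub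
    (K.isConnected'.isPreconnected.image _ (continuous_torusChar α).continuousOn)
  intro x hx
  exact (hsing ⟨x, hx, rfl⟩ ⟨0, K.toAddSubgroup.zero_mem, rfl⟩).trans (map_zero (torusChar α))

end Characters

section RationalSpan

open scoped nonZeroDivisors

variable {r : ℕ}

/-- The inclusion of `ℤ^r` into `ℚ^r`. -/
def intCastPi (r : ℕ) : (Fin r → ℤ) →ₗ[ℤ] (Fin r → ℚ) :=
  .pi fun i => Algebra.linearMap ℤ ℚ ∘ₗ .proj i

@[simp]
theorem intCastPi_apply (α : Fin r → ℤ) (i : Fin r) : intCastPi r α i = α i := rfl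

instance : IsLocalizedModule ℤ⁰ (intCastPi r) :=
  IsLocalizedModule.pi ℤ⁰ fun _ => Algebra.linearMap ℤ ℚ

/-- The rational subspace spanned by the characters trivial on `K`. -/
def rationalChars (K : AddSubgroup (Torus r)) : Submodule ℚ (Fin r → ℚ) :=
  (AddSubgroup.toIntSubmodule (trivialChars K)).localized' ℚ ℤ⁰ (intCastPi r)

theorem finrank_rationalChars (K : AddSubgroup (Torus r)) :
    Module.finrank ℚ (rationalChars K) =
      Module.finrank ℤ (AddSubgroup.toIntSubmodule (trivialChars K)) := by
  rw [IsLocalization.finrank_eq ℚ ℤ⁰ le_rfl, rationalChars]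
  have := IsLocalizedModule.finrank_eq ℤ⁰
    ((AddSubgroup.toIntSubmodule (trivialChars K)).toLocalized' ℚ ℤ⁰ (intCastPi r)) le_rfl
  convert this

theorem Subtorus.dim_eq (K : Subtorus r) :
    K.dim = r - Module.finrank ℚ (rationalChars K.toAddSubgroup) := by
  rw [Subtorus.dim, finrank_rationalChars]

theorem rationalChars_le_iff {K : AddSubgroup (Torus r)} {W : Submodule ℚ (Fin r → ℚ)} :
    rationalChars K ≤ W ↔ ∀ α ∈ trivialChars K, intCastPi r α ∈ W := by
  rw [rationalChars, Submodule.localized'_eq_span, Submodule.span_le]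
  exact Set.image_subset_iff

theorem intCastPi_mem_rationalChars {K : AddSubgroup (Torus r)} {α : Fin r → ℤ}
    (hα : α ∈ trivialChars K) : intCastPi r α ∈ rationalChars K :=
  rationalChars_le_iff.1 le_rfl α hα

theorem Subtorus.intCastPi_mem_rationalChars_iff (K : Subtorus r) {α : Fin r → ℤ} :
    intCastPi r α ∈ rationalChars K.toAddSubgroup ↔ α ∈ trivialChars K.toAddSubgroup := by
  refine ⟨fun h => ?_, intCastPi_mem_rationalChars⟩
  obtain ⟨β, hβ, n, hn⟩ := (Submodule.mem_localized' ..).1 h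
  rw [IsLocalizedModule.mk'_eq_iff] at hn
  refine K.mem_trivialChars_of_zsmul_mem (nonZeroDivisors.ne_zero n.2) (α := α) ?_
  have : β = (n : ℤ) • α := by
    ext i
    have := congrFun hn i
    simp only [intCastPi_apply, Pi.smul_apply, Submonoid.smul_def, zsmul_eq_mul] at this
    simpa using mod_cast this
  rwa [← this]

theorem Subtorus.rationalChars_injective :
    Function.Injective fun K : Subtorus r => rationalChars K.toAddSubgroup := by
  intro K L h
  refine Subtorus.ext_of_trivialChars (AddSubgroup.ext fun α => ?_)
  rw [← K.intCastPi_mem_rationalChars_iff, ← L.intCastPi_mem_rationalChars_iff]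
  exact iff_of_eq (congrArg (intCastPi r α ∈ ·) h)

/-- The projection `ℝ^r → 𝕋^r`. -/
def torusProj (r : ℕ) : (Fin r → ℝ) →+ Torus r where
  toFun v i := (v i : AddCircle (1 : ℝ))
  map_zero' := by ext; simp
  map_add' v w := by ext; simp

theorem continuous_torusProj : Continuous (torusProj r) :=
  continuous_pi fun i => (AddCircle.continuous_mk' 1).comp (continuous_apply i)

theorem torusChar_torusProj (α : Fin r → ℤ) (v : Fin r → ℝ) :
    torusChar α (torusProj r v) = ((∑ i, α i * v i : ℝ) : AddCircle (1 : ℝ)) := by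
  change ∑ i, α i • (v i : AddCircle (1 : ℝ)) = QuotientAddGroup.mk' _ _
  rw [map_sum]
  refine Finset.sum_congr rfl fun i _ => ?_
  rw [← zsmul_eq_mul, map_zsmul]
  rfl

/-- The real vectors orthogonal to a rational subspace. -/
def realOrthogonal (W : Submodule ℚ (Fin r → ℚ)) : Submodule ℝ (Fin r → ℝ) where
  carrier := {v | ∀ w ∈ W, ∑ i, (w i : ℝ) * v i = 0}
  zero_mem' := by simp
  add_mem' {v v'} hv hv' w hw := by
    simp [mul_add, Finset.sum_add_distrib, hv w hw, hv' w hw]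
  smul_mem' c v hv w hw := by
    simp only [Pi.smul_apply, smul_eq_mul, mul_left_comm _ c, ← Finset.mul_sum, hv w hw, mul_zero]

/-- The subtorus whose trivial characters are the integral points of `W`. -/
def subtorusOfRational (W : Submodule ℚ (Fin r → ℚ)) : Subtorus r where
  toAddSubgroup :=
    ((realOrthogonal W).toAddSubgroup.map (torusProj r)).topologicalClosure
  isClosed' := AddSubgroup.isClosed_topologicalClosure _
  isConnected' :=
    ((realOrthogonal W).convex.isConnected ⟨0, Submodule.zero_mem _⟩).image _
      continuous_torusProj.continuousOn |>.closure

theorem mem_trivialChars_subtorusOfRational {W : Submodule ℚ (Fin r → ℚ)} {α : Fin r → ℤ} :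
    α ∈ trivialChars (subtorusOfRational W).toAddSubgroup ↔ intCastPi r α ∈ W := by
  constructor
  · intro h
    by_contra hα
    obtain ⟨f, hfα, hfW⟩ := Submodule.exists_le_ker_of_notMem hα
    have hf (w : Fin r → ℚ) : f w = ∑ i, w i * f (Pi.single i 1) := by
      conv_lhs => rw [pi_eq_sum_univ' w]
      simp
    let v : Fin r → ℝ := fun i => (f (Pi.single i 1) : ℝ)
    have hv : v ∈ realOrthogonal W := by
      intro w hw
      have : f w = 0 := hfW hw
      rw [hf] at this
      simp only [v]
      exact_mod_cast this
    have hαv : ∑ i, (α i : ℝ) * v i ≠ 0 := by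
      rw [hf] at hfα
      simp only [intCastPi_apply] at hfα
      simp only [v]
      exact_mod_cast hfα
    set c := ∑ i, (α i : ℝ) * v i with hc
    have hmem : torusProj r ((2 * c)⁻¹ • v) ∈ (subtorusOfRational W).toAddSubgroup :=
      AddSubgroup.le_topologicalClosure _ ⟨_, (realOrthogonal W).smul_mem _ hv, rfl⟩
    have h0 : torusChar α (torusProj r ((2 * c)⁻¹ • v)) = 0 := h _ hmem
    have hsum : ∑ i, (α i : ℝ) * ((2 * c)⁻¹ • v) i = 1 / 2 := by
      simp only [Pi.smul_apply, smul_eq_mul, mul_left_comm _ (2 * c)⁻¹, ← Finset.mul_sum, ← hc]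
      field_simp
    rw [torusChar_torusProj, hsum, AddCircle.coe_eq_zero_iff] at h0
    obtain ⟨n, hn⟩ := h0
    rw [zsmul_eq_mul, mul_one] at hn
    have : (2 * n : ℤ) = 1 := by
      have : (2 * n : ℝ) = 1 := by linarith
      exact_mod_cast this
    omega
  · intro hα x hx
    refine closure_minimal (t := {x | torusChar α x = 0}) ?_
      (isClosed_eq (continuous_torusChar α) continuous_const) hx
    rintro _ ⟨v, hv, rfl⟩
    have := hv _ hα
    simp only [intCastPi_apply, Rat.cast_intCast] at this
    simp [torusChar_torusProj, this]

theorem lt_dim_subtorusOfRational {W : Submodule ℚ (Fin r → ℚ)} {s : ℕ}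
    (hW : Module.finrank ℚ W < r - s) : s < (subtorusOfRational W).dim := by
  have := Submodule.finrank_mono (rationalChars_le_iff.2 fun _ =>
    (mem_trivialChars_subtorusOfRational (W := W)).1)
  rw [Subtorus.dim_eq]
  omega

end RationalSpan

/-- Let `0 ≤ s ≤ r` and let `𝒮` be a set of subtori of `G`.  Suppose that for
every subtorus `H` of dimension greater than `s` there are finitely many characters, each
nontrivial on `H`, such that every `K ∈ 𝒮` has one of them trivial on it.  Then `𝒮` contains
only finitely many subtori of dimension `s`. -/
theorem finiteness_of_sets_of_subtori
    (r s : ℕ) (hs : s ≤ r) (S : Set (Subtorus r))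
    (h : ∀ H : Subtorus r, s < H.dim →
      ∃ (n : ℕ) (αs : Fin n → (Fin r → ℤ)),
        (∀ i, ¬ IsTrivialOn (αs i) H.toAddSubgroup) ∧
        (∀ K ∈ S, ∃ i, IsTrivialOn (αs i) K.toAddSubgroup)) :
    {K ∈ S | K.dim = s}.Finite := by
  have hrank : ∀ K : Subtorus r, K.dim = s →
      Module.finrank ℚ (rationalChars K.toAddSubgroup) = r - s := by
    intro K hK
    have := Submodule.finrank_le (rationalChars K.toAddSubgroup)
    rw [Module.finrank_fin_fun] at this
    rw [K.dim_eq] at hK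
    omega
  have key : ∀ (d : ℕ) (W : Submodule ℚ (Fin r → ℚ)), r - s ≤ Module.finrank ℚ W + d →
      {K ∈ S | K.dim = s ∧ W ≤ rationalChars K.toAddSubgroup}.Finite := by
    intro d
    induction d with
    | zero =>
      intro W hW
      refine Set.Subsingleton.finite fun K hK L hL => Subtorus.rationalChars_injective ?_
      have heq : ∀ K : Subtorus r, K.dim = s → W ≤ rationalChars K.toAddSubgroup →
          W = rationalChars K.toAddSubgroup := fun K hK hWK =>
        Submodule.eq_of_le_of_finrank_le hWK ((hrank K hK).le.trans hW)
      exact (heq K hK.2.1 hK.2.2).symm.trans (heq L hL.2.1 hL.2.2)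
    | succ d ih =>
      intro W hW
      by_cases hlt : Module.finrank ℚ W < r - s
      · obtain ⟨n, αs, hαs, hS⟩ := h _ (lt_dim_subtorusOfRational hlt)
        refine (Set.finite_iUnion fun i => ih (W ⊔ Submodule.span ℚ {intCastPi r (αs i)}) ?_).subset
          fun K hK => ?_
        · have hnot : intCastPi r (αs i) ∉ W := fun hmem =>
            hαs i (mem_trivialChars_subtorusOfRational.2 hmem)
          have := Submodule.finrank_lt_finrank_of_lt (Submodule.lt_sup_iff_notMem.2 hnot)
          omega
        · obtain ⟨i, hi⟩ := hS K hK.1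
          refine Set.mem_iUnion.2 ⟨i, hK.1, hK.2.1, sup_le hK.2.2 ?_⟩
          rw [Submodule.span_singleton_le_iff_mem]
          exact intCastPi_mem_rationalChars hi
      · exact ih W (by omega)
  exact (key r ⊥ (by omega)).subset fun K hK => ⟨hK.1, hK.2, bot_le⟩
end

section
/- The R-module T is an injective R-module. -/
noncomputable section

/-- `R = ℚ[x₁,…,x_r]`. -/
abbrev PolyR (r : ℕ) : Type := MvPolynomial (Fin r) ℚ

/-- The maximal ideal `𝔪 = (x₁,…,x_r)` of polynomials with zero constant term. -/
def mIdeal (r : ℕ) : Ideal (PolyR r) := Ideal.span (Set.range MvPolynomial.X)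

/-- The `ℚ`-linear dual `Hom_ℚ(R, ℚ)`. -/
abbrev DualR (r : ℕ) : Type := PolyR r →ₗ[ℚ] ℚ

/-- The dual is an `R`-module via `(a · φ)(b) = φ(a b)`. -/
instance dualRModule (r : ℕ) : Module (PolyR r) (DualR r) where
  smul a φ := φ.comp (LinearMap.mulLeft ℚ a)
  one_smul φ := LinearMap.ext fun p => by
    show φ (1 * p) = φ p
    rw [one_mul]
  mul_smul a b φ := LinearMap.ext fun p => by
    show φ (a * b * p) = φ (b * (a * p))
    ring_nf
  smul_zero a := LinearMap.ext fun p => by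
    show (0 : DualR r) (a * p) = 0
    rfl
  smul_add a φ ψ := LinearMap.ext fun p => by
    show (φ + ψ) (a * p) = φ (a * p) + ψ (a * p)
    rfl
  add_smul a b φ := LinearMap.ext fun p => by
    show φ ((a + b) * p) = φ (a * p) + φ (b * p)
    rw [add_mul, map_add]
  zero_smul φ := LinearMap.ext fun p => by
    show φ (0 * p) = 0
    rw [zero_mul, map_zero]

lemma DualR.smul_apply {r : ℕ} (a : PolyR r) (φ : DualR r) (p : PolyR r) :
    (a • φ : DualR r) p = φ (a * p) := rfl

/-- The `R`-submodule `T ⊆ Hom_ℚ(R,ℚ)` of functionals vanishing on some power of `𝔪`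
(it realizes `H_*(B𝕋^r; ℚ)`). -/
def Tsub (r : ℕ) : Submodule (PolyR r) (DualR r) where
  carrier := {φ | ∃ n : ℕ, ∀ p ∈ (mIdeal r) ^ n, φ p = 0}
  zero_mem' := ⟨0, fun p _ => rfl⟩
  add_mem' := by
    rintro φ ψ ⟨n, hn⟩ ⟨m, hm⟩
    refine ⟨n + m, fun p hp => ?_⟩
    have hpn : p ∈ (mIdeal r) ^ n := Ideal.pow_le_pow_right (by omega) hp
    have hpm : p ∈ (mIdeal r) ^ m := Ideal.pow_le_pow_right (by omega) hp
    show φ p + ψ p = 0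
    rw [hn p hpn, hm p hpm, add_zero]
  smul_mem' := by
    rintro a φ ⟨n, hn⟩
    refine ⟨n, fun p hp => ?_⟩
    rw [DualR.smul_apply]
    exact hn _ (Ideal.mul_mem_left _ a hp)

/-- `T`, the `𝔪`-power-torsion part of the dual of `R`, as an `R`-module. -/
abbrev Tmod (r : ℕ) : Type := ↥(Tsub r)

noncomputable instance (r : ℕ) : AddCommGroup (Tmod r) := inferInstance

noncomputable instance (r : ℕ) : Module (PolyR r) (Tmod r) := inferInstance

/-- An `R`-module is `𝔪`-power-torsion if each element is annihilated by a power of `𝔪`. -/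
def IsMTorsion (r : ℕ) (N : Type*) [AddCommGroup N] [Module (PolyR r) N] : Prop :=
  ∀ x : N, ∃ n : ℕ, ∀ a ∈ (mIdeal r) ^ n, a • x = 0

end

/-- A functional on a subspace `P` vanishing on `P ⊓ J` extends to one vanishing on `J`. -/
theorem LinearMap.exists_extend_vanishing {K V : Type*} [Field K] [AddCommGroup V] [Module K V]
    {P : Submodule K V} (J : Submodule K V) (f : P →ₗ[K] K)
    (hf : ∀ x : P, (x : V) ∈ J → f x = 0) :
    ∃ g : V →ₗ[K] K, (∀ x : P, g x = f x) ∧ ∀ x ∈ J, g x = 0 := by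
  have hmem : f ∈ LinearMap.range (J.mkQ ∘ₗ P.subtype).dualMap := by
    rw [LinearMap.range_dualMap_eq_dualAnnihilator_ker, Submodule.mem_dualAnnihilator]
    intro x hx
    exact hf x (by simpa using hx)
  obtain ⟨g, rfl⟩ := hmem
  refine ⟨g ∘ₗ J.mkQ, fun x => rfl, fun x hx => ?_⟩
  rw [LinearMap.comp_apply, Submodule.mkQ_apply, (Submodule.Quotient.mk_eq_zero J).2 hx, map_zero]

/-- A weak form of the Artin–Rees lemma for ideals. -/
theorem Ideal.exists_pow_inf_le_pow_mul {R : Type*} [CommRing R] [IsNoetherianRing R]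
    (I J : Ideal R) (n : ℕ) : ∃ N : ℕ, I ^ N ⊓ J ≤ I ^ n * J := by
  obtain ⟨k, hk⟩ := I.exists_pow_inf_eq_pow_smul (M := R) J
  refine ⟨n + k, ?_⟩
  have h := hk (n + k) (Nat.le_add_left k n)
  rw [Nat.add_sub_cancel, smul_eq_mul, Ideal.mul_top] at h
  rw [h]
  exact Ideal.mul_mono_right inf_le_right

/-- The submodule of functionals vanishing on `𝔪 ^ n`. -/
def dualVanishing (r n : ℕ) : Submodule (PolyR r) (DualR r) where
  carrier := {φ | ∀ p ∈ (mIdeal r) ^ n, φ p = 0}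
  zero_mem' := fun _ _ => rfl
  add_mem' := fun {φ ψ} hφ hψ p hp => by
    rw [LinearMap.add_apply, hφ p hp, hψ p hp, add_zero]
  smul_mem' := fun a φ hφ p hp => by
    rw [DualR.smul_apply]
    exact hφ _ (Ideal.mul_mem_left _ a hp)

theorem dualVanishing_mono (r : ℕ) : Monotone (dualVanishing r) :=
  fun _ _ hnm _ hφ p hp => hφ p (Ideal.pow_le_pow_right hnm hp)

/-- The image of a Noetherian module in `T` vanishes on a single power of `𝔪`. -/
theorem exists_forall_mem_dualVanishing {r : ℕ} {M : Type*} [AddCommGroup M]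
    [Module (PolyR r) M] [IsNoetherian (PolyR r) M] (g : M →ₗ[PolyR r] Tmod r) :
    ∃ n : ℕ, ∀ x : M, (g x : DualR r) ∈ dualVanishing r n := by
  let g' : M →ₗ[PolyR r] DualR r := (Tsub r).subtype ∘ₗ g
  obtain ⟨n, hn⟩ := monotone_stabilizes_iff_noetherian.mpr ‹IsNoetherian (PolyR r) M›
    ⟨fun n => (dualVanishing r n).comap g',
      fun _ _ h => Submodule.comap_mono (dualVanishing_mono r h)⟩
  refine ⟨n, fun x => ?_⟩
  obtain ⟨m, hm⟩ := (g x).2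
  have hx : x ∈ (dualVanishing r (max n m)).comap g' := dualVanishing_mono r (le_max_right n m) hm
  exact (hn _ (le_max_left n m)).ge hx

theorem Tmod_baer (r : ℕ) : Module.Baer (PolyR r) (Tmod r) := by
  intro I g
  have hg (a : PolyR r) (x : I) (p : PolyR r) :
      (g (a • x) : DualR r) p = (g x : DualR r) (a * p) := by
    rw [map_smul, Submodule.coe_smul, DualR.smul_apply]
  obtain ⟨n, hn⟩ := exists_forall_mem_dualVanishing g
  obtain ⟨N, hN⟩ := (mIdeal r).exists_pow_inf_le_pow_mul I n
  let f : I.restrictScalars ℚ →ₗ[ℚ] ℚ :=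
    { toFun := fun x => (g ⟨x, x.2⟩ : DualR r) 1
      map_add' := fun x y => by
        have h := map_add g ⟨x, x.2⟩ ⟨y, y.2⟩
        exact congrArg (fun t : Tmod r => (t : DualR r) 1) h
      map_smul' := fun c x => by
        have hx : (⟨(c • x : I.restrictScalars ℚ), (c • x).2⟩ : I) =
            (MvPolynomial.C c : PolyR r) • ⟨x, x.2⟩ :=
          Subtype.ext (MvPolynomial.smul_eq_C_mul _ _)
        rw [hx, hg, ← MvPolynomial.smul_eq_C_mul, map_smul, RingHom.id_apply] }
  have hmul : ∀ y ∈ (mIdeal r) ^ n * I, ∃ x : I, (x : PolyR r) = y ∧ (g x : DualR r) 1 = 0 := by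
    intro y hy
    refine Submodule.mul_induction_on hy (fun p hp a ha => ?_) ?_
    · refine ⟨p • ⟨a, ha⟩, rfl, ?_⟩
      rw [hg, mul_one]
      exact hn ⟨a, ha⟩ p hp
    · rintro _ _ ⟨u, rfl, hu⟩ ⟨v, rfl, hv⟩
      refine ⟨u + v, rfl, ?_⟩
      rw [map_add, Submodule.coe_add, LinearMap.add_apply, hu, hv, add_zero]
  have hf (x : I.restrictScalars ℚ) (hx : (x : PolyR r) ∈ (mIdeal r) ^ N) : f x = 0 := by
    obtain ⟨u, hu, hgu⟩ := hmul x (hN ⟨hx, x.2⟩)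
    obtain rfl : u = ⟨x, x.2⟩ := Subtype.ext hu
    exact hgu
  obtain ⟨μ, hμf, hμ⟩ := LinearMap.exists_extend_vanishing
    (((mIdeal r) ^ N).restrictScalars ℚ) f hf
  refine ⟨LinearMap.toSpanSingleton (PolyR r) (Tmod r) ⟨μ, N, hμ⟩, fun x hx => ?_⟩
  refine Subtype.ext (LinearMap.ext fun p => ?_)
  change μ (x * p) = _
  rw [mul_comm]
  refine (hμf ⟨p * x, I.mul_mem_left p hx⟩).trans ?_
  exact (hg p ⟨x, hx⟩ 1).trans (by rw [mul_one])

/-- `T` is an injective `R`-module. -/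
theorem Tmod_injective (r : ℕ) : Module.Injective (PolyR r) (Tmod r) := by
  exact (Tmod_baer r).injective
end

section
/- Every 𝔪-power-torsion R-module N admits an injective R-module homomorphism N → ⨁_{j∈J} T into a direct sum of copies of T whose cokernel is again an 𝔪-power-torsion R-module. -/
/-- The orbit `R • x` of a vector killed by a power of `𝔪` involves only finitely many coordinates
of a given basis. -/
lemma exists_finset_support_repr_smul {r : ℕ} {N J : Type*} [AddCommGroup N]
    [Module (PolyR r) N] [Module ℚ N] [IsScalarTower ℚ (PolyR r) N] (b : Module.Basis J ℚ N)
    (n : ℕ) (x : N) (hx : ∀ a ∈ (mIdeal r) ^ n, a • x = 0) :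
    ∃ S : Finset J, ∀ p : PolyR r, (b.repr (p • x)).support ⊆ S := by
  classical
  induction n generalizing x with
  | zero => exact ⟨∅, fun p => by simp [hx p (by simp)]⟩
  | succ n ih =>
    have hX (i : Fin r) : ∀ a ∈ (mIdeal r) ^ n, a • ((MvPolynomial.X i : PolyR r) • x) = 0 := by
      intro a ha
      rw [← mul_smul]
      refine hx _ ?_
      rw [pow_succ]
      exact Ideal.mul_mem_mul ha (Ideal.subset_span ⟨i, rfl⟩)
    choose S hS using fun i => ih _ (hX i)
    refine ⟨(b.repr x).support ∪ Finset.univ.biUnion S, fun p => ?_⟩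
    induction p using MvPolynomial.induction_on with
    | C c =>
      rw [← MvPolynomial.algebraMap_eq, algebraMap_smul, map_smul]
      exact Finsupp.support_smul.trans Finset.subset_union_left
    | add p q hp hq =>
      rw [add_smul, map_add]
      exact Finsupp.support_add.trans (Finset.union_subset hp hq)
    | mul_X p i _ =>
      rw [mul_smul]
      exact (hS i p).trans ((Finset.subset_biUnion_of_mem S (Finset.mem_univ i)).trans
        Finset.subset_union_right)

/-- The functional `p ↦ (p • x)_j` attached to a torsion vector `x` and a coordinate `j`. -/
noncomputable def coordFunctional {r : ℕ} {N J : Type*} [AddCommGroup N]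
    [Module (PolyR r) N] [Module ℚ N] [IsScalarTower ℚ (PolyR r) N] (b : Module.Basis J ℚ N)
    (hN : IsMTorsion r N) (x : N) (j : J) : Tmod r :=
  ⟨b.coord j ∘ₗ (LinearMap.toSpanSingleton (PolyR r) N x).restrictScalars ℚ, by
    obtain ⟨n, hn⟩ := hN x
    exact ⟨n, fun p hp => by simp [hn p hp]⟩⟩

lemma coordFunctional_apply {r : ℕ} {N J : Type*} [AddCommGroup N]
    [Module (PolyR r) N] [Module ℚ N] [IsScalarTower ℚ (PolyR r) N] (b : Module.Basis J ℚ N)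
    (hN : IsMTorsion r N) (x : N) (j : J) (p : PolyR r) :
    (coordFunctional b hN x j : DualR r) p = b.repr (p • x) j := rfl

lemma finite_support_coordFunctional {r : ℕ} {N J : Type*} [AddCommGroup N]
    [Module (PolyR r) N] [Module ℚ N] [IsScalarTower ℚ (PolyR r) N] (b : Module.Basis J ℚ N)
    (hN : IsMTorsion r N) (x : N) : (Function.support (coordFunctional b hN x)).Finite := by
  obtain ⟨n, hn⟩ := hN x
  obtain ⟨S, hS⟩ := exists_finset_support_repr_smul b n x hn
  refine S.finite_toSet.subset fun j hj => ?_
  by_contra hjS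
  refine hj (Subtype.ext (LinearMap.ext fun p => ?_))
  rw [coordFunctional_apply]
  exact Finsupp.notMem_support_iff.mp fun h => hjS (hS p h)

/-- The map `N → ⨁_J T` sending `x` to the family of functionals `p ↦ (p • x)_j`. -/
noncomputable def coordEmbedding {r : ℕ} {N J : Type*} [AddCommGroup N]
    [Module (PolyR r) N] [Module ℚ N] [IsScalarTower ℚ (PolyR r) N] (b : Module.Basis J ℚ N)
    (hN : IsMTorsion r N) : N →ₗ[PolyR r] (J →₀ Tmod r) where
  toFun x := Finsupp.ofSupportFinite _ (finite_support_coordFunctional b hN x)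
  map_add' x y := Finsupp.ext fun j => Subtype.ext <| LinearMap.ext fun p => by
    change b.repr (p • (x + y)) j = b.repr (p • x) j + b.repr (p • y) j
    simp
  map_smul' a x := Finsupp.ext fun j => Subtype.ext <| LinearMap.ext fun p => by
    change b.repr (p • a • x) j = b.repr ((a * p) • x) j
    rw [mul_comm, mul_smul]

lemma coordEmbedding_injective {r : ℕ} {N J : Type*} [AddCommGroup N]
    [Module (PolyR r) N] [Module ℚ N] [IsScalarTower ℚ (PolyR r) N] (b : Module.Basis J ℚ N)
    (hN : IsMTorsion r N) : Function.Injective (coordEmbedding b hN) := by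
  intro x y h
  refine b.repr.injective (Finsupp.ext fun j => ?_)
  have h1 : b.repr ((1 : PolyR r) • x) j = b.repr ((1 : PolyR r) • y) j :=
    congrArg (fun g : J →₀ Tmod r => (g j : DualR r) 1) h
  simpa using h1

lemma isMTorsion_Tmod (r : ℕ) : IsMTorsion r (Tmod r) := by
  rintro ⟨φ, n, hn⟩
  refine ⟨n, fun a ha => Subtype.ext (LinearMap.ext fun p => ?_)⟩
  exact hn _ (Ideal.mul_mem_right p _ ha)

lemma IsMTorsion.finsupp {r : ℕ} {M : Type*} [AddCommGroup M] [Module (PolyR r) M]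
    (hM : IsMTorsion r M) (J : Type*) : IsMTorsion r (J →₀ M) := by
  intro g
  choose n hn using hM
  refine ⟨g.support.sup fun j => n (g j), fun a ha => Finsupp.ext fun j => ?_⟩
  by_cases hj : j ∈ g.support
  · exact hn (g j) a (Ideal.pow_le_pow_right (Finset.le_sup (f := fun j => n (g j)) hj) ha)
  · simp [Finsupp.notMem_support_iff.mp hj]

lemma IsMTorsion.quotient {r : ℕ} {M : Type*} [AddCommGroup M] [Module (PolyR r) M]
    (hM : IsMTorsion r M) (P : Submodule (PolyR r) M) : IsMTorsion r (M ⧸ P) := by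
  intro y
  obtain ⟨x, rfl⟩ := P.mkQ_surjective y
  obtain ⟨n, hn⟩ := hM x
  exact ⟨n, fun a ha => by rw [← map_smul, hn a ha, map_zero]⟩

/-- Every `𝔪`-power-torsion `R`-module `N` embeds in a direct sum of copies
of `T` with `𝔪`-power-torsion cokernel. -/
theorem embed_torsion_in_sum_of_T
    (r : ℕ) (N : Type) [AddCommGroup N] [Module (PolyR r) N] (hN : IsMTorsion r N) :
    ∃ (J : Type) (f : N →ₗ[PolyR r] (J →₀ Tmod r)),
      Function.Injective f ∧
      IsMTorsion r ((J →₀ Tmod r) ⧸ LinearMap.range f) := by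
  let _ : Module ℚ N := Module.compHom N (algebraMap ℚ (PolyR r))
  have : IsScalarTower ℚ (PolyR r) N := IsScalarTower.of_algebraMap_smul fun _ _ => rfl
  let b := Module.Basis.ofVectorSpace ℚ N
  exact ⟨_, coordEmbedding b hN, coordEmbedding_injective b hN,
    ((isMTorsion_Tmod r).finsupp _).quotient _⟩
end

section
/- Every 𝔪-power-torsion R-module N admits an exact sequence of R-modules 0 → N → I_0 → I_1 → ⋯ → I_r → 0 in which each I_j is both an injective R-module and 𝔪-power-torsion; in particular every 𝔪-power-torsion R-module has injective dimension at most r. -/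
universe u v

open CategoryTheory TensorProduct Polynomial

section GlobalDimension

/-- Flat base change does not raise the projective dimension. -/
lemma hasProjectiveDimensionLE_baseChange {A B : Type u} [CommRing A] [CommRing B] [Algebra A B]
    [Module.Flat A B] (n : ℕ) (M : Type u) [AddCommGroup M] [Module A M]
    (hM : HasProjectiveDimensionLE (ModuleCat.of A M) n) :
    HasProjectiveDimensionLE (ModuleCat.of B (B ⊗[A] M)) n := by
  induction n generalizing M with
  | zero =>
    rw [← projective_iff_hasProjectiveDimensionLE_zero, ← IsProjective.iff_projective] at hM ⊢
    infer_instance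
  | succ n ih =>
    obtain ⟨P, _, _, _, p, hp⟩ : ∃ (P : Type u) (_ : AddCommGroup P) (_ : Module A P)
        (_ : Module.Projective A P) (p : P →ₗ[A] M), Function.Surjective p :=
      ⟨M →₀ A, inferInstance, inferInstance, inferInstance, Finsupp.linearCombination A id,
        Finsupp.linearCombination_id_surjective A M⟩
    have hS := LinearMap.shortExact_shortComplexKer hp
    have hex : Function.Exact ((LinearMap.ker p).subtype.baseChange B) (p.baseChange B) :=
      lTensor_exact B p.exact_subtype_ker_map hp
    have hT := ModuleCat.shortComplex_shortExact
      (ModuleCat.shortComplexOfCompEqZero _ _ hex.linearMap_comp_eq_zero) hex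
      (Module.Flat.lTensor_preserves_injective_linearMap _ (LinearMap.ker p).subtype_injective)
      (LinearMap.lTensor_surjective B hp)
    have hP : Projective (ModuleCat.of A P) := by
      rw [← IsProjective.iff_projective]
      infer_instance
    have hP' : Projective (ModuleCat.of B (B ⊗[A] P)) := by
      rw [← IsProjective.iff_projective]
      infer_instance
    exact (hT.hasProjectiveDimensionLT_X₃_iff n hP').mpr
      (ih _ ((hS.hasProjectiveDimensionLT_X₃_iff n hP).mp hM))

variable (A : Type u) [CommRing A] (M : Type v) [AddCommGroup M] [Module A M] [Module A[X] M]
  [IsScalarTower A A[X] M]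

/-- The endomorphism `X ⊗ 1 - 1 ⊗ X` of `A[X] ⊗[A] M`, for an `A[X]`-module `M`. -/
noncomputable def polynomialCharMap : A[X] ⊗[A] M →ₗ[A[X]] A[X] ⊗[A] M :=
  (X : A[X]) • LinearMap.id - (Algebra.lsmul A A M (X : A[X])).baseChange A[X]

/-- The action map `A[X] ⊗[A] M → M` of an `A[X]`-module `M`. -/
noncomputable def polynomialActionMap : A[X] ⊗[A] M →ₗ[A[X]] M :=
  (LinearMap.id : M →ₗ[A] M).liftBaseChange A[X]

lemma polynomialCharMap_tmul (p : A[X]) (m : M) :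
    polynomialCharMap A M (p ⊗ₜ m) = (X * p) ⊗ₜ m - p ⊗ₜ ((X : A[X]) • m) := by
  simp [polynomialCharMap, TensorProduct.smul_tmul']

lemma polynomialActionMap_tmul (p : A[X]) (m : M) :
    polynomialActionMap A M (p ⊗ₜ m) = p • m := by
  simp [polynomialActionMap]

lemma polynomialActionMap_surjective : Function.Surjective (polynomialActionMap A M) :=
  fun m ↦ ⟨1 ⊗ₜ m, by simp [polynomialActionMap_tmul]⟩

lemma polynomialCharMap_injective : Function.Injective (polynomialCharMap A M) := by
  rw [injective_iff_map_eq_zero]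
  intro t ht
  let c := TensorProduct.equivFinsuppOfBasisLeft (N := M) (Polynomial.basisMonomials A)
  have hc_tmul (p : A[X]) (m : M) (k : ℕ) : c (p ⊗ₜ m) k = p.coeff k • m := by
    simp only [c, TensorProduct.equivFinsuppOfBasisLeft_apply_tmul_apply]
    rfl
  have hc (s : A[X] ⊗[A] M) (k : ℕ) :
      c (polynomialCharMap A M s) (k + 1) = c s k - (X : A[X]) • c s (k + 1) := by
    induction s with
    | zero => simp
    | tmul p m =>
      rw [polynomialCharMap_tmul, map_sub, Finsupp.sub_apply, hc_tmul, hc_tmul, hc_tmul, hc_tmul,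
        coeff_X_mul, smul_comm]
    | add x y hx hy => simp only [map_add, Finsupp.add_apply, hx, hy, smul_add]; abel
  have hstep (k : ℕ) : c t k = (X : A[X]) • c t (k + 1) := by
    have := hc t k
    rw [ht, map_zero, Finsupp.zero_apply] at this
    exact (sub_eq_zero.mp this.symm)
  have hpow (k j : ℕ) : c t k = (X : A[X]) ^ j • c t (k + j) := by
    induction j with
    | zero => simp
    | succ j ih => rw [ih, hstep (k + j), smul_smul, pow_succ, add_assoc]
  rw [← c.map_eq_zero_iff]
  ext k
  obtain ⟨b, hb⟩ := (c t).support.bddAbove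
  have hzero : c t (k + (b + 1)) = 0 := by
    by_contra h
    have := hb (Finsupp.mem_support_iff.mpr h)
    omega
  rw [hpow k (b + 1), hzero, smul_zero, Finsupp.zero_apply]

lemma sub_one_tmul_mem_range_polynomialCharMap (t : A[X] ⊗[A] M) :
    t - 1 ⊗ₜ polynomialActionMap A M t ∈ LinearMap.range (polynomialCharMap A M) := by
  induction t with
  | zero => simp
  | tmul p m =>
    rw [polynomialActionMap_tmul]
    induction p using Polynomial.induction_on' generalizing m with
    | add p q hp hq =>
      convert add_mem (hp m) (hq m) using 1
      rw [add_tmul, add_smul, tmul_add]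
      abel
    | monomial k a =>
      induction k generalizing m with
      | zero =>
        have h : (monomial 0 a : A[X]) = algebraMap A A[X] a := rfl
        rw [h, algebraMap_smul, Algebra.algebraMap_eq_smul_one, smul_tmul, sub_self]
        exact zero_mem _
      | succ k ih =>
        have h : (monomial (k + 1) a : A[X]) = X * monomial k a := (X_mul_monomial k a).symm
        convert add_mem (LinearMap.mem_range_self (polynomialCharMap A M) (monomial k a ⊗ₜ m))
          (ih ((X : A[X]) • m)) using 1
        rw [polynomialCharMap_tmul, h, smul_smul, mul_comm (monomial k a)]
        abel
  | add x y hx hy =>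
    convert add_mem hx hy using 1
    rw [map_add, tmul_add]
    abel

lemma exact_polynomialCharMap_polynomialActionMap :
    Function.Exact (polynomialCharMap A M) (polynomialActionMap A M) := by
  intro t
  constructor
  · intro ht
    simpa [ht] using sub_one_tmul_mem_range_polynomialCharMap A M t
  · rintro ⟨s, rfl⟩
    induction s with
    | zero => simp
    | tmul p m =>
      rw [polynomialCharMap_tmul, map_sub, polynomialActionMap_tmul, polynomialActionMap_tmul,
        smul_smul, mul_comm, sub_self]
    | add x y hx hy => rw [map_add, map_add, hx, hy, add_zero]

/-- Adjoining a polynomial variable raises the global dimension by at most one. -/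
lemma Polynomial.hasProjectiveDimensionLE_succ {A : Type u} [CommRing A] (n : ℕ)
    (hA : ∀ M : ModuleCat.{u} A, HasProjectiveDimensionLE M n) (M : ModuleCat.{u} A[X]) :
    HasProjectiveDimensionLE M (n + 1) := by
  let _ : Module A M := Module.compHom M (algebraMap A A[X])
  have : IsScalarTower A A[X] M := .of_algebraMap_smul fun _ _ ↦ rfl
  have hex := exact_polynomialCharMap_polynomialActionMap A M
  have hS := ModuleCat.shortComplex_shortExact
    (ModuleCat.shortComplexOfCompEqZero _ _ hex.linearMap_comp_eq_zero) hex
    (polynomialCharMap_injective A M) (polynomialActionMap_surjective A M)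
  have hP : HasProjectiveDimensionLE (ModuleCat.of A[X] (A[X] ⊗[A] M)) n :=
    hasProjectiveDimensionLE_baseChange n M (hA _)
  exact hS.hasProjectiveDimensionLT_X₃ (n + 1) hP
    (hasProjectiveDimensionLT_of_ge _ (n + 1) _ (by omega))

lemma forall_hasProjectiveDimensionLE_iff_forall_hasInjectiveDimensionLE
    {A : Type u} [CommRing A] (n : ℕ) :
    (∀ M : ModuleCat.{u} A, HasProjectiveDimensionLE M n) ↔
      ∀ M : ModuleCat.{u} A, HasInjectiveDimensionLE M n := by
  simp only [HasProjectiveDimensionLE, HasInjectiveDimensionLE, hasProjectiveDimensionLT_iff,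
    hasInjectiveDimensionLT_iff]
  exact ⟨fun h M i hi N e ↦ h N i hi e, fun h M i hi N e ↦ h N i hi e⟩

lemma forall_hasInjectiveDimensionLE_of_ringEquiv {A B : Type u} [CommRing A] [CommRing B]
    (e : A ≃+* B) (n : ℕ) (hB : ∀ M : ModuleCat.{u} B, HasInjectiveDimensionLE M n)
    (M : ModuleCat.{u} A) : HasInjectiveDimensionLE M n := by
  have := RingHomInvPair.of_ringEquiv e
  have := RingHomInvPair.of_ringEquiv e.symm
  let _ : Module B M := Module.compHom M e.symm.toRingHom
  let f : M ≃ₛₗ[RingHomClass.toRingHom e] ModuleCat.of B M :=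
    { AddEquiv.refl M with
      map_smul' := fun a m ↦ by
        change a • m = e.symm (e a) • m
        rw [e.symm_apply_apply] }
  exact (ModuleCat.hasInjectiveDimensionLE_iff_of_semiLinearEquiv e f n).mpr (hB _)

/-- Every module over a polynomial ring in `r` variables over a field has injective dimension
at most `r`. -/
lemma MvPolynomial.hasInjectiveDimensionLE (k : Type u) [Field k] (r : ℕ)
    (M : ModuleCat.{u} (MvPolynomial (Fin r) k)) : HasInjectiveDimensionLE M r := by
  induction r with
  | zero =>
    refine forall_hasInjectiveDimensionLE_of_ringEquiv
      (MvPolynomial.isEmptyRingEquiv k (Fin 0)) 0 ?_ M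
    rw [← forall_hasProjectiveDimensionLE_iff_forall_hasInjectiveDimensionLE]
    intro M
    rw [← projective_iff_hasProjectiveDimensionLE_zero, ← IsProjective.iff_projective]
    exact Module.Projective.of_free
  | succ r ih =>
    refine forall_hasInjectiveDimensionLE_of_ringEquiv
      (MvPolynomial.finSuccEquiv k r).toRingEquiv (r + 1) ?_ M
    rw [← forall_hasProjectiveDimensionLE_iff_forall_hasInjectiveDimensionLE]
    exact Polynomial.hasProjectiveDimensionLE_succ r
      ((forall_hasProjectiveDimensionLE_iff_forall_hasInjectiveDimensionLE r).mpr ih)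

lemma MvPolynomial.hasInjectiveDimensionLE_uLift (k : Type u) [Field k] (r : ℕ) (N : Type u)
    [AddCommGroup N] [Module (MvPolynomial (Fin r) k) N] :
    HasInjectiveDimensionLE (ModuleCat.of (MvPolynomial (Fin r) k) (ULift.{v} N)) r :=
  have : Small.{max u v} (MvPolynomial (Fin r) k) := small_lift.{u, v, u} _
  (ModuleCat.hasInjectiveDimensionLE_iff_of_linearEquiv.{u, max u v}
    (M := ModuleCat.of (MvPolynomial (Fin r) k) N)
    (N := ModuleCat.of (MvPolynomial (Fin r) k) (ULift.{v} N)) ULift.moduleEquiv.symm r).mp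
    (MvPolynomial.hasInjectiveDimensionLE k r _)

end GlobalDimension

section PowerTorsion

variable {R : Type u} [CommRing R] (J : Ideal R) (M : Type v) [AddCommGroup M] [Module R M]

/-- The submodule of elements annihilated by some power of the ideal `J`. -/
def powTorsion : Submodule R M where
  carrier := {x | ∃ n : ℕ, ∀ a ∈ J ^ n, a • x = 0}
  zero_mem' := ⟨0, fun a _ ↦ smul_zero a⟩
  add_mem' := by
    rintro x y ⟨n, hn⟩ ⟨m, hm⟩
    refine ⟨n + m, fun a ha ↦ ?_⟩
    rw [smul_add, hn a (Ideal.pow_le_pow_right (by omega) ha),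
      hm a (Ideal.pow_le_pow_right (by omega) ha), add_zero]
  smul_mem' := by
    rintro c x ⟨n, hn⟩
    exact ⟨n, fun a ha ↦ by rw [smul_comm, hn a ha, smul_zero]⟩

variable {J M} in
lemma exists_pow_smul_eq_zero_of_fg {P : Submodule R M} (hP : P.FG) (h : P ≤ powTorsion J M) :
    ∃ n : ℕ, ∀ a ∈ J ^ n, ∀ x ∈ P, a • x = 0 := by
  induction P, hP using Submodule.fg_induction with
  | singleton x =>
    obtain ⟨n, hn⟩ := h (Submodule.mem_span_singleton_self x)
    refine ⟨n, fun a ha y hy ↦ ?_⟩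
    obtain ⟨c, rfl⟩ := Submodule.mem_span_singleton.mp hy
    rw [smul_comm, hn a ha, smul_zero]
  | sup P Q _ _ hP hQ =>
    obtain ⟨n, hn⟩ := hP (le_sup_left.trans h)
    obtain ⟨m, hm⟩ := hQ (le_sup_right.trans h)
    refine ⟨n + m, fun a ha z hz ↦ ?_⟩
    obtain ⟨x, hx, y, hy, rfl⟩ := Submodule.mem_sup.mp hz
    rw [smul_add, hn a (Ideal.pow_le_pow_right (by omega) ha) x hx,
      hm a (Ideal.pow_le_pow_right (by omega) ha) y hy, add_zero]

/-- Over a Noetherian ring, the `J`-power-torsion part of an injective module is injective. -/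
lemma injective_powTorsion [IsNoetherianRing R] [Small.{v} R] (hM : Module.Injective R M) :
    Module.Injective R (powTorsion J M) := by
  refine Module.Baer.injective fun K g ↦ ?_
  obtain ⟨n, hn⟩ := exists_pow_smul_eq_zero_of_fg (J := J)
    (P := LinearMap.range ((powTorsion J M).subtype ∘ₗ g))
    (by
      rw [LinearMap.range_eq_map]
      exact (Module.Finite.fg_top (R := R) (M := K)).map _)
    (by
      rintro _ ⟨x, rfl⟩
      exact (g x).2)
  obtain ⟨k, hk⟩ := J.exists_pow_inf_eq_pow_smul (M := R) K
  have hker : ∀ x : K, (x : R) ∈ J ^ (n + k) → g x = 0 := by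
    have hle : J ^ (n + k) ⊓ K ≤ J ^ n • K := by
      have h := hk (n + k) (by omega)
      rw [Nat.add_sub_cancel, smul_eq_mul, Ideal.mul_top] at h
      rw [h]
      exact Submodule.smul_mono le_rfl inf_le_right
    have hmap : J ^ n • K ≤ (LinearMap.ker g).map K.subtype := by
      rw [Submodule.smul_le]
      intro a ha x hx
      refine ⟨a • ⟨x, hx⟩, ?_, rfl⟩
      rw [SetLike.mem_coe, LinearMap.mem_ker, map_smul]
      exact Subtype.ext (hn a ha _ ⟨⟨x, hx⟩, rfl⟩)
    intro x hx
    obtain ⟨y, hy, hyx⟩ := hmap (hle ⟨hx, x.2⟩)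
    rwa [← Subtype.ext hyx]
  let φ : K →ₗ[R] R ⧸ J ^ (n + k) := (J ^ (n + k)).mkQ ∘ₗ K.subtype
  have hφ : LinearMap.ker φ ≤ LinearMap.ker ((powTorsion J M).subtype ∘ₗ g) := by
    intro x hx
    have : (x : R) ∈ J ^ (n + k) := by simpa [φ, Ideal.Quotient.eq_zero_iff_mem] using hx
    simp [hker x this]
  obtain ⟨h, hh⟩ := (Module.Baer.of_injective hM).extension_property
    ((LinearMap.ker φ).liftQ φ le_rfl)
    (LinearMap.ker_eq_bot.mp (Submodule.ker_liftQ_eq_bot _ _ _ le_rfl))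
    ((LinearMap.ker φ).liftQ _ hφ)
  have hmem : h (Submodule.Quotient.mk 1) ∈ powTorsion J M := by
    refine ⟨n + k, fun a ha ↦ ?_⟩
    rw [← map_smul, ← Submodule.Quotient.mk_smul, smul_eq_mul, mul_one,
      (Submodule.Quotient.mk_eq_zero _).mpr ha, map_zero]
  refine ⟨LinearMap.toSpanSingleton R _ ⟨_, hmem⟩, fun x hx ↦ Subtype.ext ?_⟩
  have := LinearMap.congr_fun hh (Submodule.Quotient.mk ⟨x, hx⟩)
  simp only [LinearMap.comp_apply, Submodule.liftQ_apply, Submodule.subtype_apply] at this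
  rw [← this, LinearMap.toSpanSingleton_apply, Submodule.coe_smul, ← map_smul,
    ← Submodule.Quotient.mk_smul, smul_eq_mul, mul_one]
  rfl

end PowerTorsion

section Resolution

variable {r : ℕ}

lemma IsMTorsion.of_surjective {M : Type u} {N : Type v} [AddCommGroup M] [AddCommGroup N]
    [Module (PolyR r) M] [Module (PolyR r) N] (hM : IsMTorsion r M) (f : M →ₗ[PolyR r] N)
    (hf : Function.Surjective f) : IsMTorsion r N := by
  intro y
  obtain ⟨x, rfl⟩ := hf y
  obtain ⟨n, hn⟩ := hM x
  exact ⟨n, fun a ha ↦ by rw [← map_smul, hn a ha, map_zero]⟩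

/-- Every `𝔪`-power-torsion module embeds into an injective `𝔪`-power-torsion module. -/
lemma IsMTorsion.exists_injective_embedding {N : Type u} [AddCommGroup N] [Module (PolyR r) N]
    (hN : IsMTorsion r N) :
    ∃ (E : ModuleCat.{u} (PolyR r)) (f : N →ₗ[PolyR r] E),
      Module.Injective (PolyR r) E ∧ IsMTorsion r E ∧ Function.Injective f := by
  obtain ⟨Q, hQ, f, hf⟩ := EnoughInjectives.presentation (ModuleCat.of (PolyR r) N)
  have hQ' : Module.Injective (PolyR r) Q := Module.injective_module_of_injective_object _ _
  refine ⟨ModuleCat.of _ (powTorsion (mIdeal r) Q), f.hom.codRestrict _ fun x ↦ ?_,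
    injective_powTorsion _ _ hQ', fun x ↦ ?_, ?_⟩
  · obtain ⟨n, hn⟩ := hN x
    exact ⟨n, fun a ha ↦ by rw [← map_smul, hn a ha, map_zero]⟩
  · obtain ⟨n, hn⟩ := x.2
    exact ⟨n, fun a ha ↦ Subtype.ext (hn a ha)⟩
  · intro x y hxy
    exact (ModuleCat.mono_iff_injective f).mp hf (congrArg Subtype.val hxy)

/-- An `𝔪`-power-torsion module of injective dimension at most `k` has a resolution of length `k`
by injective `𝔪`-power-torsion modules. -/
lemma IsMTorsion.exists_resolution (k : ℕ) (N : Type u) [AddCommGroup N] [Module (PolyR r) N]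
    (hN : IsMTorsion r N) (hk : HasInjectiveDimensionLE (ModuleCat.of (PolyR r) N) k) :
    ∃ (I : ℕ → ModuleCat.{u} (PolyR r))
      (f : N →ₗ[PolyR r] I 0)
      (d : ∀ n : ℕ, I n →ₗ[PolyR r] I (n + 1)),
      (∀ n ≤ k, Module.Injective (PolyR r) (I n) ∧ IsMTorsion r (I n)) ∧
      (∀ n, k < n → Subsingleton (I n)) ∧
      Function.Injective f ∧
      LinearMap.range f = LinearMap.ker (d 0) ∧
      (∀ n : ℕ, LinearMap.range (d n) = LinearMap.ker (d (n + 1))) := by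
  induction k generalizing N with
  | zero =>
    have hinj : Module.Injective (PolyR r) N := by
      rw [Module.injective_iff_injective_object]
      exact injective_iff_hasInjectiveDimensionLT_one.mpr hk
    refine ⟨fun | 0 => ModuleCat.of _ N | _ + 1 => ModuleCat.of _ PUnit, LinearMap.id,
      fun _ ↦ 0, ?_, ?_, Function.injective_id, ?_, fun n ↦ ?_⟩
    · intro n hn
      obtain rfl : n = 0 := by omega
      exact ⟨hinj, hN⟩
    · rintro (_ | n) hn
      · omega
      · exact inferInstanceAs (Subsingleton PUnit)
    · rw [LinearMap.range_id, LinearMap.ker_zero]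
    · have : Subsingleton (ModuleCat.of (PolyR r) PUnit.{u + 1}) :=
        inferInstanceAs (Subsingleton PUnit)
      exact Subsingleton.elim (α := Submodule (PolyR r) (ModuleCat.of (PolyR r) PUnit.{u + 1})) _ _
  | succ k ih =>
    obtain ⟨E, f, hE, hEt, hf⟩ := hN.exists_injective_embedding
    have hS := ModuleCat.shortComplex_shortExact
      (ModuleCat.shortComplexOfCompEqZero _ _ f.exact_map_mkQ_range.linearMap_comp_eq_zero)
      f.exact_map_mkQ_range hf (Submodule.mkQ_surjective _)
    have hE' : CategoryTheory.Injective E := (Module.injective_iff_injective_object _ E).mp hE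
    obtain ⟨I, g, d, hI, hsub, hg, hexact₀, hexact⟩ := ih (E ⧸ LinearMap.range f)
      (hEt.of_surjective _ (Submodule.mkQ_surjective _))
      ((hS.hasInjectiveDimensionLT_X₃_iff k hE').mpr hk)
    refine ⟨fun | 0 => E | n + 1 => I n, f,
      fun | 0 => g ∘ₗ (LinearMap.range f).mkQ | n + 1 => d n, ?_, ?_, hf, ?_, ?_⟩
    · rintro (_ | n) hn
      · exact ⟨hE, hEt⟩
      · exact hI n (by omega)
    · rintro (_ | n) hn
      · omega
      · exact hsub n (by omega)
    · change _ = LinearMap.ker (g ∘ₗ (LinearMap.range f).mkQ)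
      rw [LinearMap.ker_comp_of_ker_eq_bot _ (LinearMap.ker_eq_bot.mpr hg), Submodule.ker_mkQ]
    · rintro (_ | n)
      · change LinearMap.range (g ∘ₗ (LinearMap.range f).mkQ) = LinearMap.ker (d 0)
        rw [LinearMap.range_comp_of_range_eq_top _ (Submodule.range_mkQ _), hexact₀]
      · exact hexact n

end Resolution

/-- Every `𝔪`-power-torsion `R`-module `N` admits an exact sequence
`0 → N → I_0 → I_1 → ⋯ → I_r → 0` in which each `I_j` is both injective and
`𝔪`-power-torsion; in particular every `𝔪`-power-torsion module has injective dimension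
at most `r`.  (We encode the finite resolution by an `ℕ`-indexed complex which vanishes in
degrees `> r`; exactness at the last nonzero spot then encodes surjectivity.) -/
theorem torsion_injective_resolution_of_length_r
    (r : ℕ) (N : Type) [AddCommGroup N] [Module (PolyR r) N] (hN : IsMTorsion r N) :
    ∃ (I : ℕ → ModuleCat (PolyR r))
      (f : N →ₗ[PolyR r] I 0)
      (d : ∀ n : ℕ, I n →ₗ[PolyR r] I (n + 1)),
      (∀ n ≤ r, Module.Injective (PolyR r) (I n) ∧ IsMTorsion r (I n)) ∧
      (∀ n, r < n → Subsingleton (I n)) ∧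
      Function.Injective f ∧
      LinearMap.range f = LinearMap.ker (d 0) ∧
      (∀ n : ℕ, LinearMap.range (d n) = LinearMap.ker (d (n + 1))) := by
  refine Exists.imp ?_ (IsMTorsion.exists_resolution r (ULift N)
    (hN.of_surjective (ULift.moduleEquiv (R := PolyR r) (M := N)).symm.toLinearMap
      (LinearEquiv.surjective _))
    (MvPolynomial.hasInjectiveDimensionLE_uLift ℚ r N))
  rintro I ⟨f, d, hI, hsub, hf, hexact₀, hexact⟩
  refine ⟨f ∘ₗ ULift.moduleEquiv.symm.toLinearMap, d, hI, hsub,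
    hf.comp (LinearEquiv.injective _), ?_, hexact⟩
  rw [LinearMap.range_comp_of_range_eq_top _ (LinearEquiv.range _), hexact₀]
end
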